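/- arXiv:2501.11466 — 2 statements merged into one kernel-verified Lean document; each statement's English description precedes it below -/
import Mathlib

section
/- Let n ≥ 4 and 2 ≤ k ≤ n−2 be integers, let m be an integer, let A be an (n−k)×n matrix over ℂ with y_{i,j}(A) ≠ 0 for all 0 ≤ i ≤ n−k and 0 ≤ j ≤ k (where now y_{i,j}(A) = p_{σ^m J^ch_{i,j}}(A)), and let q ∈ ℂ. Then Σ_{i=1}^{n} ( p_{J_i⁺}(A)/p_{J_i}(A) ) · q^{δ_{i,k}} = ( y_{1,k−1}/y_{0,k} ) · q^{δ(m ≡ ⌈k/2⌉)} + ( y_{n−k−1,1}/y_{n−k,0} ) · q^{δ(m ≡ ⌈(n+k)/2⌉)} + Σ_{d=1−k}^{n−k−2} [ Σ_{(a,b) : a−b = d, 0 ≤ a ≤ n−k−1, 1 ≤ b ≤ k−1} ( y_{a,b+1} y_{a+1,b−1} )/( y_{a,b} y_{a+1,b} ) + Σ_{(a,b) : a−b = d, 1 ≤ a ≤ n−k−1, 1 ≤ b ≤ k} ( y_{a−1,b} y_{a+1,b−1} )/( y_{a,b−1} y_{a,b} ) ] · q^{ε_{m,d}}, where ε_{m,d}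 = δ(d even and m ≡ −d/2 mod n) + δ(d odd and m ≡ (d+1)/2 + k mod n), δ(P) = 1 if P holds and 0 otherwise, δ_{i,k} is the Kronecker delta, congruences of half-integers count only when the quantity is an integer, and all y's are evaluated at A. -/
open Finset

/-- The set `[m] = {1, …, m} ⊆ ℤ/nℤ` (with `[0] = ∅`). -/
def seg (n m : ℕ) : Finset (ZMod n) := (Finset.Icc 1 m).image (fun t : ℕ => (t : ZMod n))

/-- The Plücker coordinate `p_J(A)` of an `r×n` matrix `A` whose columns are indexed by
`ℤ/nℤ`: the determinant of the `r×r` submatrix of `A` formed by the columns indexed by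
`J`, ordered by the representatives `1, …, n` in increasing order (and `0` if `J` does
not have exactly `r` elements).  The auxiliary key `x ↦ (x−1).val` is order-isomorphic
to the representative in `{1, …, n}`. -/
noncomputable def plucker (n r : ℕ) (A : Matrix (Fin r) (ZMod n) ℂ)
    (J : Finset (ZMod n)) : ℂ :=
  if h : (J.image (fun x => (x - 1).val)).card = r then
    (A.submatrix id
      (fun i => ((((J.image (fun x => (x - 1).val)).orderIsoOfFin h i :
        (J.image (fun x => (x - 1).val))) : ℕ) : ZMod n) + 1)).det
  else 0

/-- The cyclic interval `J_i = {i+1, …, i+(n−k)} ⊆ ℤ/nℤ`. -/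
def Jcyc (n k : ℕ) (i : ZMod n) : Finset (ZMod n) :=
  (Finset.Icc 1 (n - k)).image (fun t : ℕ => i + (t : ZMod n))

/-- `J_i⁺ = (J_i ∖ {i+n−k}) ∪ {i+n−k+1}`. -/
def Jplus (n k : ℕ) (i : ZMod n) : Finset (ZMod n) :=
  insert (i + (((n - k + 1 : ℕ)) : ZMod n)) ((Jcyc n k i).erase (i + (((n - k : ℕ)) : ZMod n)))

/-- The checkboard label `J^ch_{i,j} = σ^{−⌈(i+j)/2⌉}( [i] ∪ ([n−k+j]∖[i+j]) )`. -/
def Jch (k n i j : ℕ) : Finset (ZMod n) :=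
  (seg n i ∪ (seg n (n - k + j) \ seg n (i + j))).image
    (fun x => x - (((i + j + 1) / 2 : ℕ) : ZMod n))

/-- The Plücker coordinates `y_{i,j}` attached to the checkboard graph. -/
noncomputable def ych (k n : ℕ) (A : Matrix (Fin (n - k)) (ZMod n) ℂ) (i j : ℕ) : ℂ :=
  plucker n (n - k) A (Jch k n i j)

/-- First sum appearing in the superpotential formulas:
`Σ_{a−b=d, 0 ≤ a ≤ n−k−1, 1 ≤ b ≤ k−1} (y_{a,b+1} y_{a+1,b−1})/(y_{a,b} y_{a+1,b})`. -/
noncomputable def sumA (k n : ℕ) (y : ℕ → ℕ → ℂ) (d : ℤ) : ℂ :=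
  ∑ p ∈ ((Finset.range (n - k)) ×ˢ (Finset.Icc 1 (k - 1))).filter
      (fun p => (p.1 : ℤ) - (p.2 : ℤ) = d),
    (y p.1 (p.2 + 1) * y (p.1 + 1) (p.2 - 1)) / (y p.1 p.2 * y (p.1 + 1) p.2)

/-- Second sum appearing in the superpotential formulas:
`Σ_{a−b=d, 1 ≤ a ≤ n−k−1, 1 ≤ b ≤ k} (y_{a−1,b} y_{a+1,b−1})/(y_{a,b−1} y_{a,b})`. -/
noncomputable def sumB (k n : ℕ) (y : ℕ → ℕ → ℂ) (d : ℤ) : ℂ :=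
  ∑ p ∈ ((Finset.Icc 1 (n - k - 1)) ×ˢ (Finset.Icc 1 k)).filter
      (fun p => (p.1 : ℤ) - (p.2 : ℤ) = d),
    (y (p.1 - 1) p.2 * y (p.1 + 1) (p.2 - 1)) / (y p.1 (p.2 - 1) * y p.1 p.2)

/-- The labels of the rotated checkboard graph `σ^m G^ch_{k,n}`. -/
def JchRot (k n : ℕ) (m : ℤ) (i j : ℕ) : Finset (ZMod n) :=
  (Jch k n i j).image (fun x => x + (m : ZMod n))

/-- The Plücker coordinates `y_{i,j}` attached to the rotated checkboard graph. -/
noncomputable def ychRot (k n : ℕ) (m : ℤ) (A : Matrix (Fin (n - k)) (ZMod n) ℂ)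
    (i j : ℕ) : ℂ :=
  plucker n (n - k) A (JchRot k n m i j)

/-- The exponent `ε_{m,d} = δ(d even and m ≡ −d/2 mod n) + δ(d odd and m ≡ (d+1)/2 + k mod n)`. -/
def epsExp (n k : ℕ) (m d : ℤ) : ℕ :=
  (if 2 ∣ d ∧ (m : ZMod n) = ((-(d / 2) : ℤ) : ZMod n) then 1 else 0) +
  (if ¬ 2 ∣ d ∧ (m : ZMod n) = (((d + 1) / 2 + (k : ℤ) : ℤ) : ZMod n) then 1 else 0)

/-!
Extend the columns of `A` from the representatives `1, …, n` to all integers, multiplying by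
`(-1) ^ (n - k - 1)` at each shift by `n`. This is the sign of the cyclic permutation of `n - k`
columns, so the Plücker coordinate of a set of residues can be computed from its representatives in
any window `(N, N + n]`. In this description `y_{a,b}` is the minor of an interval of length `a`
ending at an integer `e`, followed after a gap of length `b` by an interval of length `n - k - a`,
where `e = m + ⌊(a - b) / 2⌋`.

Fix an even `d` and let `e = m + d / 2`. For `a - b ∈ {d, d + 1}` consider the ratio of the minor
`y_{a,b}` with column `e` replaced by `e + 1` to `y_{a,b}` itself. By the three-term Plücker
relation, the summands attached to the diagonal `a - b = d` are the differences of consecutive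
ratios along the staircase formed by these `(a, b)`. The ratio is `0` at the start of the staircase,
where column `e` is absent or `e + 1` already occurs, and `p_{J_i⁺} / p_{J_i}` with `i = e + k` at
its end, where the two intervals merge cyclically into one. Odd diagonals become even ones under
`(a, b) ↦ (n - k - a, k - b)`, which exchanges the two intervals. The two extra terms account for
the diagonals `d = -k` and `d = n - k - 1`, and as `d` runs over `[-k, n - k - 1]` the index `i`
takes every value modulo `n` exactly once.
-/

theorem det_mul_det_updateCol {m R : Type*} [Fintype m] [DecidableEq m] [CommRing R]
    (M N : Matrix m m R) (c : m → R) (j : m) :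
    M.det * (N.updateCol j c).det =
      ∑ i, (M.updateCol i c).det * (N.updateCol j (M.col i)).det := by
  have expansion : M.det • c = ∑ i, (M.updateCol i c).det • M.col i := by
    rw [← Matrix.mulVec_cramer, Matrix.mulVec_eq_sum]
    exact Finset.sum_congr rfl fun i _ => op_smul_eq_smul _ _
  have cramer_expansion := congrFun (congrArg N.cramer expansion) j
  simp only [map_smul, map_sum, Finset.sum_apply, Pi.smul_apply, smul_eq_mul] at cramer_expansion
  simpa only [Matrix.cramer_apply] using cramer_expansion

section ColumnMinor

variable {ι R : Type*} [CommRing R] {r : ℕ} (B : Matrix (Fin r) ι R)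

/-- The determinant of the square matrix whose columns are the columns of `B` named in the list
`L`, in the order of `L`; it is `0` when `L` does not have as many entries as `B` has rows, so that
identities between such minors need no length hypotheses. -/
noncomputable def columnMinor (L : List ι) : R :=
  if h : L.length = r then (B.submatrix id fun i => L.get (i.cast h.symm)).det else 0

theorem columnMinor_of_length_ne {L : List ι} (h : L.length ≠ r) : columnMinor B L = 0 :=
  dif_neg h

theorem columnMinor_get (L : List ι) (C : Matrix (Fin L.length) ι R) :
    columnMinor C L = (C.submatrix id L.get).det :=
  dif_pos rfl

theorem columnMinor_of_not_nodup {L : List ι} (h : ¬ L.Nodup) : columnMinor B L = 0 := by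
  by_cases hr : L.length = r
  · subst hr
    obtain ⟨i, j, hget, hij⟩ := Function.not_injective_iff.1 (mt List.nodup_iff_injective_get.2 h)
    rw [columnMinor_get]
    exact Matrix.det_zero_of_column_eq hij fun t => congrArg (B t) hget
  · exact columnMinor_of_length_ne B hr

theorem columnMinor_swap (L₀ L₁ : List ι) (x y : ι) :
    columnMinor B (L₀ ++ x :: y :: L₁) = -columnMinor B (L₀ ++ y :: x :: L₁) := by
  by_cases hr : (L₀ ++ y :: x :: L₁).length = r
  · subst hr
    let p : Fin (L₀ ++ y :: x :: L₁).length := ⟨L₀.length, by simp⟩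
    let p' : Fin (L₀ ++ y :: x :: L₁).length := ⟨L₀.length + 1, by simp⟩
    have hpp' : p ≠ p' := by simp [p, p']
    have hget (i) : (L₀ ++ x :: y :: L₁).get (Fin.cast (by simp) i) =
        (L₀ ++ y :: x :: L₁).get (Equiv.swap p p' i) := by
      simp only [Equiv.swap_apply_def, p, p']
      grind
    have submatrix_eq : (B.submatrix id fun i => (L₀ ++ x :: y :: L₁).get (Fin.cast (by simp) i)) =
        (B.submatrix id (L₀ ++ y :: x :: L₁).get).submatrix id (Equiv.swap p p') := by
      ext i j
      exact congrArg (B i) (hget j)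
    rw [columnMinor_get, columnMinor, dif_pos (by simp), submatrix_eq, Matrix.det_permute',
      Equiv.Perm.sign_swap hpp']
    simp
  · rw [columnMinor_of_length_ne B hr, neg_zero, columnMinor_of_length_ne B (by simpa using hr)]

theorem columnMinor_move (L₀ L₁ L₂ : List ι) (x : ι) :
    columnMinor B (L₀ ++ (L₁ ++ x :: L₂)) =
      (-1) ^ L₁.length * columnMinor B (L₀ ++ x :: (L₁ ++ L₂)) := by
  induction L₁ generalizing L₀ with
  | nil => simp
  | cons z L₁ ih =>
    have := ih (L₀ ++ [z])
    simp only [List.append_assoc, List.cons_append, List.nil_append] at this ⊢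
    rw [this, columnMinor_swap, List.length_cons]
    ring

theorem columnMinor_append_cons (L₁ L₂ : List ι) (x : ι) :
    columnMinor B (L₁ ++ x :: L₂) = (-1) ^ L₁.length * columnMinor B (x :: (L₁ ++ L₂)) :=
  columnMinor_move B [] L₁ L₂ x

theorem columnMinor_cons_append_cons (L₁ L₂ : List ι) (x y : ι) :
    columnMinor B (y :: (L₁ ++ x :: L₂)) =
      (-1) ^ L₁.length * columnMinor B (y :: x :: (L₁ ++ L₂)) :=
  columnMinor_move B [y] L₁ L₂ x

variable {B} in
theorem columnMinor_cons_of_col_eq_mul {x y : ι} {c : R} (h : ∀ i, B i x = c * B i y)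
    (L : List ι) : columnMinor B (x :: L) = c * columnMinor B (y :: L) := by
  by_cases hr : (y :: L).length = r
  · subst hr
    have hx : B.submatrix id (x :: L).get =
        (B.submatrix id (y :: L).get).updateCol 0 (c • B.col y) := by
      ext i j
      refine Fin.cases ?_ (fun j => ?_) j <;> simp [h]
    have hy : (B.submatrix id (y :: L).get).updateCol 0 (B.col y) =
        B.submatrix id (y :: L).get := Matrix.updateCol_eq_self _ 0
    rw [columnMinor_get, ← hy, ← Matrix.det_updateCol_smul, ← hx]
    exact columnMinor_get (x :: L) B
  · rw [columnMinor_of_length_ne B hr, mul_zero, columnMinor_of_length_ne B (by simpa using hr)]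

theorem columnMinor_three_term_cons (S : List ι) (a b c d : ι) :
    columnMinor B (a :: b :: S) * columnMinor B (c :: d :: S) =
      columnMinor B (c :: b :: S) * columnMinor B (a :: d :: S) +
        columnMinor B (a :: c :: S) * columnMinor B (b :: d :: S) := by
  by_cases hr : r = S.length + 2
  · subst hr
    let M (x y : ι) : Matrix (Fin (S.length + 2)) (Fin (S.length + 2)) R :=
      B.submatrix id (x :: y :: S).get
    have columnMinor_eq (x y : ι) : columnMinor B (x :: y :: S) = (M x y).det :=
      columnMinor_get (x :: y :: S) B
    have updateCol_zero (x y z : ι) : (M x y).updateCol 0 (B.col z) = M z y := by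
      ext i j
      refine Fin.cases ?_ (fun j => ?_) j <;> simp [M]
    have updateCol_one (x y z : ι) : (M x y).updateCol 1 (B.col z) = M x z := by
      ext i j
      refine Fin.cases ?_ (fun j => Fin.cases ?_ (fun j => ?_) j) j <;> simp [M, Fin.ext_iff]
    have vanish (i : Fin S.length) : (M (S.get i) d).det = 0 := by
      rw [← columnMinor_eq]
      exact columnMinor_of_not_nodup B (by simp)
    have col_zero : (M a b).col 0 = B.col a := rfl
    have col_one : (M a b).col 1 = B.col b := rfl
    have col_succ_succ (i : Fin S.length) : (M a b).col i.succ.succ = B.col (S.get i) := rfl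
    have exchange := det_mul_det_updateCol (M a b) (M c d) (B.col c) 0
    simp only [Fin.sum_univ_succ, Fin.succ_zero_eq_one, col_zero, col_one, col_succ_succ,
      updateCol_zero, updateCol_one, vanish, mul_zero, Finset.sum_const_zero, add_zero] at exchange
    simpa only [columnMinor_eq] using exchange
  · have ne (x y : ι) : columnMinor B (x :: y :: S) = 0 :=
      columnMinor_of_length_ne B (by simpa [eq_comm] using hr)
    simp only [ne, mul_zero, add_zero]

/-- With `a, b, S₁, c, S₂, d, S₃` in this order all signs are positive. -/
theorem columnMinor_three_term (S₁ S₂ S₃ : List ι) (a b c d : ι) :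
    columnMinor B (a :: (S₁ ++ c :: (S₂ ++ S₃))) * columnMinor B (b :: (S₁ ++ (S₂ ++ d :: S₃))) =
      columnMinor B (a :: b :: (S₁ ++ (S₂ ++ S₃))) * columnMinor B (S₁ ++ c :: (S₂ ++ d :: S₃)) +
        columnMinor B (a :: (S₁ ++ (S₂ ++ d :: S₃))) *
          columnMinor B (b :: (S₁ ++ c :: (S₂ ++ S₃))) := by
  have hd (x : ι) : columnMinor B (x :: (S₁ ++ (S₂ ++ d :: S₃))) =
      (-1) ^ S₁.length * (-1) ^ S₂.length * columnMinor B (x :: d :: (S₁ ++ (S₂ ++ S₃))) := by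
    simpa [pow_add] using columnMinor_cons_append_cons B (S₁ ++ S₂) S₃ d x
  rw [columnMinor_append_cons, hd, hd, hd, columnMinor_cons_append_cons,
    columnMinor_cons_append_cons]
  linear_combination ((-1) ^ S₁.length) ^ 2 * (-1) ^ S₂.length *
    columnMinor_three_term_cons B (S₁ ++ (S₂ ++ S₃)) a c b d

theorem columnMinor_div_sub_div {K : Type*} [Field K] (B : Matrix (Fin r) ι K)
    (S₁ S₂ S₃ : List ι) (a b c d : ι) (hac : columnMinor B (a :: (S₁ ++ c :: (S₂ ++ S₃))) ≠ 0)
    (had : columnMinor B (a :: (S₁ ++ (S₂ ++ d :: S₃))) ≠ 0) :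
    columnMinor B (b :: (S₁ ++ (S₂ ++ d :: S₃))) / columnMinor B (a :: (S₁ ++ (S₂ ++ d :: S₃))) -
        columnMinor B (b :: (S₁ ++ c :: (S₂ ++ S₃))) /
          columnMinor B (a :: (S₁ ++ c :: (S₂ ++ S₃))) =
      columnMinor B (S₁ ++ c :: (S₂ ++ d :: S₃)) *
          columnMinor B (a :: b :: (S₁ ++ (S₂ ++ S₃))) /
        (columnMinor B (a :: (S₁ ++ c :: (S₂ ++ S₃))) *
          columnMinor B (a :: (S₁ ++ (S₂ ++ d :: S₃)))) := by
  field_simp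
  linear_combination columnMinor_three_term B S₁ S₂ S₃ a b c d

end ColumnMinor

section IntervalList

/-- The increasing list `[s + 1, …, s + l]` of `l` consecutive integers. -/
def intervalList (s : ℤ) (l : ℕ) : List ℤ :=
  (List.range l).map fun t : ℕ => s + 1 + t

theorem mem_intervalList {s t : ℤ} {l : ℕ} : t ∈ intervalList s l ↔ s < t ∧ t ≤ s + l := by
  simp only [intervalList, List.mem_map, List.mem_range]
  exact ⟨by rintro ⟨u, hu, rfl⟩; omega, fun ht => ⟨(t - s - 1).toNat, by omega, by omega⟩⟩

theorem pairwise_intervalList (s : ℤ) (l : ℕ) : (intervalList s l).Pairwise (· < ·) :=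
  List.pairwise_map.2 (List.pairwise_lt_range.imp fun h => by omega)

@[simp]
theorem length_intervalList (s : ℤ) (l : ℕ) : (intervalList s l).length = l := by
  simp [intervalList]

@[simp]
theorem intervalList_zero (s : ℤ) : intervalList s 0 = [] := rfl

theorem intervalList_eq_cons {s z : ℤ} {l l' : ℕ} (hz : z = s + 1) (hl : l = l' + 1) :
    intervalList s l = z :: intervalList z l' := by
  subst hz hl
  simp only [intervalList, List.range_succ_eq_map, List.map_cons, List.map_map]
  congr 1
  · simp
  · exact List.map_congr_left fun t _ => by simp only [Function.comp_apply]; push_cast; ring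

theorem intervalList_eq_append_singleton {s z : ℤ} {l l' : ℕ} (hz : z = s + l) (hl : l = l' + 1) :
    intervalList s l = intervalList s l' ++ [z] := by
  subst hz hl
  simp only [intervalList, List.range_succ, List.map_append, List.map_cons, List.map_nil]
  congr 2
  push_cast
  ring

theorem intervalList_append {s z : ℤ} {l l' : ℕ} (hz : z = s + l) :
    intervalList s l ++ intervalList z l' = intervalList s (l + l') := by
  subst hz
  induction l' with
  | zero => simp
  | succ l' ih =>
    rw [intervalList_eq_append_singleton rfl rfl, ← List.append_assoc, ih,
      intervalList_eq_append_singleton _ (add_assoc l l' 1).symm]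
    push_cast
    ring

theorem map_add_intervalList (s c : ℤ) (l : ℕ) :
    (intervalList s l).map (· + c) = intervalList (s + c) l := by
  rw [intervalList, List.map_map]
  exact List.map_congr_left fun t _ => by simp only [Function.comp_apply]; ring

end IntervalList

section TwistedPeriodic

variable {R : Type*} [CommRing R] {r n : ℕ}

/-- The columns of `B` are periodic with period `n` up to the sign `(-1) ^ (r - 1)`. This is the
sign of the cyclic permutation of `r` columns, so a maximal minor does not change when its first
index `x` is replaced by a last index `x + n`. -/
def IsTwistedPeriodic (n : ℕ) (B : Matrix (Fin r) ℤ R) : Prop :=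
  ∀ i t, B i (t + n) = (-1) ^ (r - 1) * B i t

variable {B : Matrix (Fin r) ℤ R}

theorem columnMinor_append_singleton_add (hB : IsTwistedPeriodic n B) (L : List ℤ) (x : ℤ) :
    columnMinor B (L ++ [x + n]) = columnMinor B (x :: L) := by
  rw [columnMinor_append_cons, List.append_nil, columnMinor_cons_of_col_eq_mul fun i => hB i x,
    ← mul_assoc, ← pow_add]
  by_cases hr : (x :: L).length = r
  · have even : Even (L.length + (r - 1)) := ⟨L.length, by simp [← hr]⟩
    rw [even.neg_one_pow, one_mul]
  · rw [columnMinor_of_length_ne B hr, mul_zero]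

theorem columnMinor_append_map_add (hB : IsTwistedPeriodic n B) (L₁ L₂ : List ℤ) :
    columnMinor B (L₂ ++ L₁.map (· + (n : ℤ))) = columnMinor B (L₁ ++ L₂) := by
  induction L₁ generalizing L₂ with
  | nil => simp
  | cons x L₁ ih =>
    rw [List.map_cons, ← List.singleton_append, ← List.append_assoc, ih, ← List.append_assoc,
      columnMinor_append_singleton_add hB, List.cons_append]

end TwistedPeriodic

section Plucker

variable {K : Type*} [Field K] {n r : ℕ}

/-- The columns of `A` continued from the representatives `1, …, n` of `ℤ/nℤ` to all integers, so
that shifting the index by `n` multiplies the column by `(-1) ^ (r - 1)`. -/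
noncomputable def twistedExtension (A : Matrix (Fin r) (ZMod n) K) : Matrix (Fin r) ℤ K :=
  fun i t => ((-1) ^ (r - 1)) ^ ((t - 1) / n) * A i t

theorem isTwistedPeriodic_twistedExtension [NeZero n] (A : Matrix (Fin r) (ZMod n) K) :
    IsTwistedPeriodic n (twistedExtension A) := by
  intro i t
  have turn : (t + n - 1) / (n : ℤ) = (t - 1) / n + 1 := by
    rw [add_sub_right_comm, Int.add_ediv_of_dvd_right dvd_rfl,
      Int.ediv_self (by simp [NeZero.ne n])]
  simp only [twistedExtension, turn]
  rw [zpow_add_one₀ (by simp)]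
  push_cast
  rw [ZMod.natCast_self, add_zero]
  ring

theorem twistedExtension_of_mem_Ioc (A : Matrix (Fin r) (ZMod n) K) (i : Fin r) {t : ℤ}
    (ht : t ∈ Set.Ioc 0 (n : ℤ)) : twistedExtension A i t = A i t := by
  obtain ⟨pos, le⟩ := ht
  rw [twistedExtension, Int.ediv_eq_zero_of_lt (by omega) (by omega), zpow_zero, one_mul]

/-- The integers in the window `(N, N + n]` with residue class in `J`, in increasing order. -/
def windowList (N : ℤ) (J : Finset (ZMod n)) : List ℤ :=
  (intervalList N n).filter fun t => (t : ZMod n) ∈ J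

theorem mem_windowList {N t : ℤ} {J : Finset (ZMod n)} :
    t ∈ windowList N J ↔ (N < t ∧ t ≤ N + n) ∧ (t : ZMod n) ∈ J := by
  simp only [windowList, List.mem_filter, mem_intervalList, decide_eq_true_iff]

theorem pairwise_windowList (N : ℤ) (J : Finset (ZMod n)) : (windowList N J).Pairwise (· < ·) :=
  (pairwise_intervalList N n).filter _

theorem windowList_zero_eq_map_sort [NeZero n] (J : Finset (ZMod n)) :
    windowList 0 J = (J.image fun x => (x - 1).val).sort.map fun s : ℕ => (s : ℤ) + 1 := by
  refine (pairwise_windowList 0 J).eq_of_mem_iff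
    (List.pairwise_map.2 ((Finset.sortedLT_sort _).pairwise.imp fun h => by omega)) fun t => ?_
  simp only [mem_windowList, List.mem_map, Finset.mem_sort, Finset.mem_image]
  constructor
  · rintro ⟨⟨pos, le⟩, ht⟩
    refine ⟨_, ⟨t, ht, rfl⟩, ?_⟩
    rw [← Int.cast_one, ← Int.cast_sub, ZMod.val_intCast, Int.emod_eq_of_lt] <;> omega
  · rintro ⟨_, ⟨x, hx, rfl⟩, rfl⟩
    have := ZMod.val_lt (x - 1)
    exact ⟨by omega, by simpa using hx⟩

theorem plucker_eq_columnMinor_windowList_zero [NeZero n] (A : Matrix (Fin r) (ZMod n) ℂ)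
    (J : Finset (ZMod n)) :
    plucker n r A J = columnMinor (twistedExtension A) (windowList 0 J) := by
  have length_eq : (windowList 0 J).length = (J.image fun x => (x - 1).val).card := by
    rw [windowList_zero_eq_map_sort, List.length_map, Finset.length_sort]
  rw [columnMinor, plucker]
  by_cases h : (J.image fun x => (x - 1).val).card = r
  · rw [dif_pos h, dif_pos (length_eq.trans h)]
    congr 1
    ext i j
    have get_eq : (windowList 0 J).get (j.cast (length_eq.trans h).symm) =
        ((J.image fun x => (x - 1).val).orderEmbOfFin h j : ℤ) + 1 := by
      simp [windowList_zero_eq_map_sort, Finset.orderEmbOfFin_apply]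
    have get_mem := (mem_windowList.1 (List.get_mem _ (j.cast (length_eq.trans h).symm))).1
    rw [Matrix.submatrix_apply, Matrix.submatrix_apply,
      twistedExtension_of_mem_Ioc A _ (by simpa using get_mem), get_eq]
    simp
  · rw [dif_neg h, dif_neg (length_eq.trans_ne h)]

theorem columnMinor_windowList_add_one [NeZero n] {R : Type*} [CommRing R]
    {B : Matrix (Fin r) ℤ R} (hB : IsTwistedPeriodic n B) (N : ℤ) (J : Finset (ZMod n)) :
    columnMinor B (windowList (N + 1) J) = columnMinor B (windowList N J) := by
  obtain ⟨l, hl⟩ := Nat.exists_eq_succ_of_ne_zero (NeZero.ne n)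
  have cast_next : ((N + 1 + n : ℤ) : ZMod n) = ((N + 1 : ℤ) : ZMod n) := by simp
  have interval : intervalList N n = (N + 1) :: intervalList (N + 1) l :=
    intervalList_eq_cons rfl hl
  have interval_next : intervalList (N + 1) n = intervalList (N + 1) l ++ [N + 1 + n] :=
    intervalList_eq_append_singleton rfl hl
  rw [windowList, windowList, interval, interval_next, List.filter_append]
  simp only [List.filter_cons, List.filter_nil, cast_next]
  split
  · exact columnMinor_append_singleton_add hB _ _
  · rw [List.append_nil]

theorem plucker_eq_columnMinor [NeZero n] (A : Matrix (Fin r) (ZMod n) ℂ) {J : Finset (ZMod n)}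
    (N : ℤ) {L : List ℤ} (sorted : L.Pairwise (· < ·))
    (window : ∀ t ∈ L, N < t ∧ t ≤ N + n)
    (mem_iff : ∀ t, N < t → t ≤ N + n → (t ∈ L ↔ (t : ZMod n) ∈ J)) :
    plucker n r A J = columnMinor (twistedExtension A) L := by
  have periodic : Function.Periodic
      (fun N => columnMinor (twistedExtension A) (windowList N J)) 1 := fun N =>
    columnMinor_windowList_add_one (isTwistedPeriodic_twistedExtension A) N J
  have L_eq : L = windowList N J := by
    refine sorted.eq_of_mem_iff (pairwise_windowList N J) fun t => ?_
    rw [mem_windowList]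
    exact ⟨fun ht => ⟨window t ht, (mem_iff t (window t ht).1 (window t ht).2).1 ht⟩,
      fun ht => (mem_iff t ht.1.1 ht.1.2).2 ht.2⟩
  rw [L_eq, plucker_eq_columnMinor_windowList_zero]
  simpa using (periodic.int_mul_eq N).symm

end Plucker

section Labels

variable {n : ℕ}

theorem intCast_inj_of_abs_sub_lt {a b : ℤ} (h : |a - b| < n) :
    (a : ZMod n) = b ↔ a = b := by
  refine ⟨fun heq => ?_, congrArg _⟩
  have dvd := (ZMod.intCast_eq_intCast_iff_dvd_sub b a n).1 heq.symm
  exact sub_eq_zero.1 (Int.eq_zero_of_abs_lt_dvd dvd h)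

theorem intCast_mem_seg {u : ℤ} {l : ℕ} (pos : 0 < u) (le : u ≤ n) (hl : l ≤ n) :
    (u : ZMod n) ∈ seg n l ↔ u ≤ l := by
  simp only [seg, Finset.mem_image, Finset.mem_Icc]
  constructor
  · rintro ⟨t, ⟨one_le, t_le⟩, ht⟩
    rw [← Int.cast_natCast, intCast_inj_of_abs_sub_lt (abs_lt.2 (by omega))] at ht
    omega
  · intro hu
    lift u to ℕ using pos.le
    exact ⟨u, by omega, by simp⟩

theorem mem_Jcyc {k : ℕ} {x t : ZMod n} : t ∈ Jcyc n k x ↔ t - x ∈ seg n (n - k) := by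
  simp only [Jcyc, seg, Finset.mem_image, eq_sub_iff_add_eq, add_comm]

theorem mem_JchRot {k a b : ℕ} {m : ℤ} {t : ZMod n} :
    t ∈ JchRot k n m a b ↔ t - (m - ((a + b + 1) / 2 : ℕ)) ∈
      seg n a ∪ seg n (n - k + b) \ seg n (a + b) := by
  simp only [JchRot, Jch, Finset.image_image, Finset.mem_image]
  constructor
  · rintro ⟨x, hx, rfl⟩
    convert hx using 1
    simp only [Function.comp_apply]
    ring
  · exact fun ht => ⟨_, ht, by simp only [Function.comp_apply]; ring⟩

/-- The minor of `B` on the interval of length `a` ending at `e` together with the interval of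
length `r - a` that follows after a gap of length `b`. The Plücker coordinates `y_{a,b}` of a
rotated checkboard are of this form. -/
noncomputable def gapMinor {R : Type*} [CommRing R] {r : ℕ} (B : Matrix (Fin r) ℤ R) (e : ℤ)
    (a b : ℕ) : R :=
  columnMinor B (intervalList (e - a) a ++ intervalList (e + b) (r - a))

theorem ychRot_eq_gapMinor [NeZero n] {k a b : ℕ} (hk : k ≤ n) (ha : a ≤ n - k) (hb : b ≤ k)
    (m : ℤ) (A : Matrix (Fin (n - k)) (ZMod n) ℂ) :
    ychRot k n m A a b = gapMinor (twistedExtension A) (m + ((a : ℤ) - b) / 2) a b := by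
  have start : m + ((a : ℤ) - b) / 2 - a = m - ((a + b + 1) / 2 : ℕ) := by omega
  refine plucker_eq_columnMinor A (m + ((a : ℤ) - b) / 2 - a) ?_ (fun t ht => ?_)
    fun t lt le => ?_
  · refine List.pairwise_append.2 ⟨pairwise_intervalList _ _, pairwise_intervalList _ _, ?_⟩
    simp only [mem_intervalList]
    omega
  · simp only [List.mem_append, mem_intervalList] at ht
    omega
  · have cast_sub : (t : ZMod n) - (m - ((a + b + 1) / 2 : ℕ)) =
        (t - (m + ((a : ℤ) - b) / 2 - a) : ℤ) := by
      rw [start, Int.cast_sub, Int.cast_sub, Int.cast_natCast]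
    rw [mem_JchRot, cast_sub, Finset.mem_union, Finset.mem_sdiff,
      intCast_mem_seg (by omega) (by omega) (by omega),
      intCast_mem_seg (by omega) (by omega) (by omega),
      intCast_mem_seg (by omega) (by omega) (by omega),
      List.mem_append, mem_intervalList, mem_intervalList]
    omega

/-- The quotient `p_{J_x⁺} / p_{J_x}`, for minors on integer column indices. -/
noncomputable def cyclicRatio {K : Type*} [Field K] {r : ℕ} (B : Matrix (Fin r) ℤ K) (x : ℤ) :
    K :=
  columnMinor B (intervalList x (r - 1) ++ [x + r + 1]) / columnMinor B (intervalList x r)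

theorem plucker_Jcyc [NeZero n] {k : ℕ} (A : Matrix (Fin (n - k)) (ZMod n) ℂ) (x : ℤ) :
    plucker n (n - k) A (Jcyc n k x) =
      columnMinor (twistedExtension A) (intervalList x (n - k)) := by
  refine plucker_eq_columnMinor A x (pairwise_intervalList _ _) (fun t ht => ?_) fun t lt le => ?_
  · rw [mem_intervalList] at ht
    omega
  · rw [mem_intervalList, mem_Jcyc, ← Int.cast_sub,
      intCast_mem_seg (by omega) (by omega) (by omega)]
    omega

theorem plucker_Jplus [NeZero n] {k : ℕ} (hk : 0 < k) (hkn : k < n)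
    (A : Matrix (Fin (n - k)) (ZMod n) ℂ) (x : ℤ) :
    plucker n (n - k) A (Jplus n k x) = columnMinor (twistedExtension A)
      (intervalList x (n - k - 1) ++ [x + (n - k : ℕ) + 1]) := by
  refine plucker_eq_columnMinor A x ?_ (fun t ht => ?_) fun t lt le => ?_
  · refine List.pairwise_append.2 ⟨pairwise_intervalList _ _, List.pairwise_singleton _ _, ?_⟩
    simp only [mem_intervalList, List.mem_singleton]
    omega
  · simp only [List.mem_append, mem_intervalList, List.mem_singleton] at ht
    omega
  · have cast_add (l : ℕ) : (x : ZMod n) + l = (x + l : ℤ) := by push_cast; rfl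
    rw [List.mem_append, mem_intervalList, List.mem_singleton, Jplus, Finset.mem_insert,
      Finset.mem_erase, mem_Jcyc, cast_add, cast_add, ne_eq, ← Int.cast_sub,
      intCast_mem_seg (by omega) (by omega) (by omega),
      intCast_inj_of_abs_sub_lt (abs_lt.2 (by omega)),
      intCast_inj_of_abs_sub_lt (abs_lt.2 (by omega))]
    omega

theorem plucker_Jplus_div_plucker_Jcyc [NeZero n] {k : ℕ} (hk : 0 < k) (hkn : k < n)
    (A : Matrix (Fin (n - k)) (ZMod n) ℂ) (x : ℤ) :
    plucker n (n - k) A (Jplus n k x) / plucker n (n - k) A (Jcyc n k x) =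
      cyclicRatio (twistedExtension A) x := by
  rw [plucker_Jplus hk hkn, plucker_Jcyc, cyclicRatio]

end Labels

section GapMinor

variable {R : Type*} [CommRing R] {r n : ℕ} {B : Matrix (Fin r) ℤ R}

theorem gapMinor_eq_columnMinor_append (hB : IsTwistedPeriodic n B) (e : ℤ) (a b : ℕ) :
    gapMinor B e a b =
      columnMinor B (intervalList (e + b) (r - a) ++ intervalList (e - a + n) a) := by
  rw [gapMinor, ← columnMinor_append_map_add hB, map_add_intervalList]

theorem gapMinor_succ (hB : IsTwistedPeriodic n B) (e : ℤ) (a b : ℕ) :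
    gapMinor B e (a + 1) b = columnMinor B
      (e :: (intervalList (e + b) (r - (a + 1)) ++ intervalList (e - (a + 1) + n) a)) := by
  have interval : intervalList (e - (a + 1 : ℕ)) (a + 1) =
      intervalList (e - (a + 1 : ℕ)) a ++ [e] :=
    intervalList_eq_append_singleton (by ring) rfl
  rw [gapMinor, interval, List.append_assoc, ← columnMinor_append_map_add hB,
    map_add_intervalList, Nat.cast_add_one, List.singleton_append, List.cons_append]

theorem gapMinor_add_two (hB : IsTwistedPeriodic n B) (e : ℤ) (a b : ℕ) :
    gapMinor B (e + 1) (a + 2) b = columnMinor B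
      (e :: (e + 1) :: (intervalList (e + 1 + b) (r - (a + 2)) ++
        intervalList (e - (a + 1) + n) a)) := by
  have start : e + 1 - (a + 2 : ℕ) = e - (a + 1) := by push_cast; ring
  have interval : intervalList (e - (a + 1)) (a + 2) =
      intervalList (e - (a + 1)) a ++ [e, e + 1] := by
    rw [intervalList_eq_append_singleton (z := e + 1) (by push_cast; ring) rfl,
      intervalList_eq_append_singleton (z := e) (by push_cast; ring) rfl, List.append_assoc]
    rfl
  rw [gapMinor, start, interval, List.append_assoc, ← columnMinor_append_map_add hB,
    map_add_intervalList]
  rfl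

theorem gapMinor_dual {k : ℕ} (hB : IsTwistedPeriodic n B) (hn : r + k = n) (e : ℤ) {a b : ℕ}
    (ha : a ≤ r) (hb : b ≤ k) :
    gapMinor B e a b = gapMinor B (e + b + (r - a : ℕ)) (r - a) (k - b) := by
  have start : e + b + (r - a : ℕ) - (r - a : ℕ) = e + b := by ring
  have restart : e + b + (r - a : ℕ) + (k - b : ℕ) = e - a + n := by omega
  rw [gapMinor_eq_columnMinor_append hB, gapMinor, Nat.sub_sub_self ha, start, restart]

end GapMinor

section ShiftRatio

variable {K : Type*} [Field K] {r : ℕ} {B : Matrix (Fin r) ℤ K}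

/-- The factor by which `gapMinor B e a b` changes when its column `e` is replaced by the column
`e + 1`. For `a = 0` there is no column `e`; the numerator is then the minor of a list of length
`r + 1`, which is `0`. -/
noncomputable def shiftRatio (B : Matrix (Fin r) ℤ K) (e : ℤ) (a b : ℕ) : K :=
  columnMinor B (intervalList (e - a) (a - 1) ++ (e + 1) :: intervalList (e + b) (r - a)) /
    gapMinor B e a b

theorem shiftRatio_zero_left (B : Matrix (Fin r) ℤ K) (e : ℤ) (b : ℕ) :
    shiftRatio B e 0 b = 0 := by
  rw [shiftRatio, columnMinor_of_length_ne B (by simp), zero_div]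

theorem shiftRatio_zero_right (B : Matrix (Fin r) ℤ K) (e : ℤ) {a : ℕ} (ha : a < r) :
    shiftRatio B e a 0 = 0 := by
  have mem : e + 1 ∈ intervalList (e + (0 : ℕ)) (r - a) := mem_intervalList.2 (by omega)
  rw [shiftRatio, columnMinor_of_not_nodup B, zero_div]
  exact fun nodup => (List.nodup_cons.1 (List.nodup_append.1 nodup).2.1).1 mem

variable {n k : ℕ}

theorem shiftRatio_succ (hB : IsTwistedPeriodic n B) (e : ℤ) (a b : ℕ) :
    shiftRatio B e (a + 1) b =
      columnMinor B
          ((e + 1) :: (intervalList (e + b) (r - (a + 1)) ++ intervalList (e - (a + 1) + n) a)) /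
        columnMinor B
          (e :: (intervalList (e + b) (r - (a + 1)) ++ intervalList (e - (a + 1) + n) a)) := by
  rw [shiftRatio, gapMinor_succ hB, Nat.add_sub_cancel, ← columnMinor_append_map_add hB,
    map_add_intervalList, Nat.cast_add_one, List.cons_append]

theorem shiftRatio_one (hB : IsTwistedPeriodic n B) (e : ℤ) (b : ℕ) :
    shiftRatio B e 1 (b + 1) = gapMinor B (e + 1) 1 b / gapMinor B e 1 (b + 1) := by
  have start : e + (b + 1 : ℕ) = e + 1 + b := by push_cast; ring
  rw [shiftRatio_succ hB, gapMinor_succ hB, gapMinor_succ hB, start]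
  simp

theorem shiftRatio_succ_left_sub (hB : IsTwistedPeriodic n B) (e : ℤ) {a : ℕ} (b : ℕ) (ha : a < r)
    (h : gapMinor B e a (b + 1) ≠ 0) (h' : gapMinor B e (a + 1) (b + 1) ≠ 0) :
    shiftRatio B e (a + 1) (b + 1) - shiftRatio B e a (b + 1) =
      gapMinor B (e - 1) a (b + 2) * gapMinor B (e + 1) (a + 1) b /
        (gapMinor B e a (b + 1) * gapMinor B e (a + 1) (b + 1)) := by
  cases a with
  | zero =>
    have gapMinor_zero : gapMinor B (e - 1) 0 (b + 2) = gapMinor B e 0 (b + 1) := by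
      simp only [gapMinor, intervalList_zero]
      congr 3
      push_cast
      ring
    rw [shiftRatio_zero_left, sub_zero, zero_add, shiftRatio_one hB, gapMinor_zero,
      mul_div_mul_left _ _ h]
  | succ a =>
    have snoc : intervalList (e + (b + 1 : ℕ)) (r - (a + 1)) =
        intervalList (e + (b + 1 : ℕ)) (r - (a + 1 + 1)) ++ [e + (b + 1 : ℕ) + (r - (a + 1) : ℕ)] :=
      intervalList_eq_append_singleton rfl (by omega)
    have cons : intervalList (e - ((a + 1 : ℕ) + 1) + n) (a + 1) =
        (e - (a + 1) + n) :: intervalList (e - (a + 1) + n) a :=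
      intervalList_eq_cons (by push_cast; ring) rfl
    have start : e - 1 + (b + 2 : ℕ) = e + (b + 1 : ℕ) := by push_cast; ring
    have start' : e + 1 + (b : ℤ) = e + (b + 1 : ℕ) := by push_cast; ring
    have restart : e - 1 - (a + 1 : ℕ) + n = e - ((a + 1 : ℕ) + 1) + n := by ring
    have telescope := columnMinor_div_sub_div B
      (intervalList (e + (b + 1 : ℕ)) (r - (a + 1 + 1))) []
      (intervalList (e - (a + 1) + n) a) e (e + 1) (e + (b + 1 : ℕ) + (r - (a + 1) : ℕ))
      (e - (a + 1) + n)
    rw [gapMinor_succ hB e a, snoc] at h ⊢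
    rw [gapMinor_succ hB e (a + 1), cons] at h' ⊢
    rw [shiftRatio_succ hB, shiftRatio_succ hB, snoc, cons, gapMinor_add_two hB,
      gapMinor_eq_columnMinor_append hB (e - 1), start, start', restart, snoc, cons]
    simp only [List.append_assoc, List.singleton_append, List.nil_append] at h h' telescope ⊢
    exact telescope h h'

theorem shiftRatio_succ_right_sub (hB : IsTwistedPeriodic n B) (e : ℤ) {a : ℕ} (b : ℕ)
    (ha : a + 1 < r) (h : gapMinor B e (a + 1) b ≠ 0) (h' : gapMinor B e (a + 1) (b + 1) ≠ 0) :
    shiftRatio B e (a + 1) (b + 1) - shiftRatio B e (a + 1) b =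
      gapMinor B (e - 1) a (b + 1) * gapMinor B (e + 1) (a + 2) b /
        (gapMinor B e (a + 1) b * gapMinor B e (a + 1) (b + 1)) := by
  have cons : intervalList (e + b) (r - (a + 1)) =
      (e + (b + 1 : ℕ)) :: intervalList (e + (b + 1 : ℕ)) (r - (a + 2)) :=
    intervalList_eq_cons (by push_cast; ring) (by omega)
  have snoc : intervalList (e + (b + 1 : ℕ)) (r - (a + 1)) =
      intervalList (e + (b + 1 : ℕ)) (r - (a + 2)) ++ [e + (b + 1 : ℕ) + (r - (a + 1) : ℕ)] :=
    intervalList_eq_append_singleton rfl (by omega)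
  have cons_snoc : intervalList (e + b) (r - a) =
      (e + (b + 1 : ℕ)) :: (intervalList (e + (b + 1 : ℕ)) (r - (a + 2)) ++
        [e + (b + 1 : ℕ) + (r - (a + 1) : ℕ)]) := by
    rw [← snoc]
    exact intervalList_eq_cons (by push_cast; ring) (by omega)
  have start : e - 1 + (b + 1 : ℕ) = e + b := by push_cast; ring
  have start' : e + 1 + (b : ℤ) = e + (b + 1 : ℕ) := by push_cast; ring
  have restart : e - 1 - (a : ℤ) + n = e - (a + 1) + n := by ring
  have telescope := columnMinor_div_sub_div B [] (intervalList (e + (b + 1 : ℕ)) (r - (a + 2)))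
    (intervalList (e - (a + 1) + n) a) e (e + 1) (e + (b + 1 : ℕ))
    (e + (b + 1 : ℕ) + (r - (a + 1) : ℕ))
  rw [gapMinor_succ hB e a b, cons] at h ⊢
  rw [gapMinor_succ hB e a (b + 1), snoc] at h' ⊢
  rw [shiftRatio_succ hB, shiftRatio_succ hB, snoc, cons, gapMinor_add_two hB,
    gapMinor_eq_columnMinor_append hB (e - 1), start, start', restart, cons_snoc]
  simp only [List.append_assoc, List.nil_append, List.cons_append]
    at h h' telescope ⊢
  exact telescope h h'

theorem cyclicRatio_add (hB : IsTwistedPeriodic n B) (hn : r + k = n) (hr : 0 < r) (e : ℤ) :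
    cyclicRatio B (e + k) = columnMinor B ((e + 1) :: intervalList (e + k) (r - 1)) /
      columnMinor B (e :: intervalList (e + k) (r - 1)) := by
  have interval : intervalList (e + k) r = intervalList (e + k) (r - 1) ++ [e + n] :=
    intervalList_eq_append_singleton (by omega) (by omega)
  have next : e + k + r + 1 = e + 1 + n := by omega
  rw [cyclicRatio, interval, next, columnMinor_append_singleton_add hB,
    columnMinor_append_singleton_add hB]

theorem shiftRatio_eq_cyclicRatio (hB : IsTwistedPeriodic n B) (hn : r + k = n) (e : ℤ)
    {a b : ℕ} (ha : 0 < a) (har : a ≤ r) (h : a = r ∨ b = k) :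
    shiftRatio B e a b = cyclicRatio B (e + k) := by
  obtain ⟨a, rfl⟩ := Nat.exists_eq_succ_of_ne_zero ha.ne'
  have interval : intervalList (e + b) (r - (a + 1)) ++ intervalList (e - (a + 1) + n) a =
      intervalList (e + k) (r - 1) := by
    rcases h with rfl | rfl
    · rw [Nat.sub_self, intervalList_zero, List.nil_append]
      congr 1
      omega
    · have start : e - (a + 1) + n = e + b + (r - (a + 1) : ℕ) := by omega
      rw [intervalList_append start]
      congr 1
      omega
  rw [shiftRatio_succ hB, cyclicRatio_add hB hn (by omega), interval]

end ShiftRatio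

section DiagonalSums

variable {n k : ℕ} {y : ℕ → ℕ → ℂ} {d : ℤ}

theorem sumA_eq_sum_even {g : ℕ → ℂ} (hk : 0 < k) (hkn : k < n) (hd : d ≤ (n : ℤ) - k - 2)
    (hg : ∀ a b : ℕ, a + 1 ≤ n - k → b + 2 ≤ k → (a : ℤ) - (b + 1 : ℕ) = d →
      y a (b + 2) * y (a + 1) b / (y a (b + 1) * y (a + 1) (b + 1)) = g (2 * (b + 1))) :
    sumA k n y d =
      ∑ p ∈ Finset.Ico (max 1 (-2 * d).toNat) (min (2 * k) (2 * ((n : ℤ) - k - d) - 1).toNat) with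
        Even p, g p := by
  refine Finset.sum_nbij' (fun p => 2 * p.2) (fun p => (((p / 2 : ℕ) + d).toNat, p / 2))
    ?_ ?_ ?_ ?_ ?_
  all_goals
    simp only [Prod.forall, Finset.mem_filter, Finset.mem_product, Finset.mem_range,
      Finset.mem_Icc, Finset.mem_Ico, Nat.even_iff, Prod.mk.injEq]
  case refine_5 =>
    rintro a (_ | b) h
    · omega
    · exact hg a b (by omega) (by omega) h.2
  all_goals omega

theorem sumB_eq_sum_odd {g : ℕ → ℂ} (hkn : k < n) (hd : d ≤ (n : ℤ) - k - 2)
    (hg : ∀ a b : ℕ, a + 2 ≤ n - k → b + 1 ≤ k → (a : ℤ) - b = d →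
      y a (b + 1) * y (a + 2) b / (y (a + 1) b * y (a + 1) (b + 1)) = g (2 * b + 1)) :
    sumB k n y d =
      ∑ p ∈ Finset.Ico (max 1 (-2 * d).toNat) (min (2 * k) (2 * ((n : ℤ) - k - d) - 1).toNat) with
        ¬ Even p, g p := by
  refine Finset.sum_nbij' (fun p => 2 * p.2 - 1)
    (fun p => ((((p + 1) / 2 : ℕ) + d).toNat, (p + 1) / 2)) ?_ ?_ ?_ ?_ ?_
  all_goals
    simp only [Prod.forall, Finset.mem_filter, Finset.mem_product, Finset.mem_Icc,
      Finset.mem_Ico, Nat.even_iff, Prod.mk.injEq]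
  case refine_5 =>
    rintro (_ | a) (_ | b) h
    iterate 3 omega
    exact hg a b (by omega) (by omega) (by omega)
  all_goals omega

theorem sumA_add_sumB_of_telescoping {f : ℕ → ℕ → ℂ} {T : ℂ} (hk : 0 < k) (hkn : k < n)
    (hd : 1 - (k : ℤ) ≤ d) (hd' : d ≤ (n : ℤ) - k - 2)
    (stepA : ∀ a b : ℕ, a + 1 ≤ n - k → b + 2 ≤ k → (a : ℤ) - (b + 1 : ℕ) = d →
      y a (b + 2) * y (a + 1) b / (y a (b + 1) * y (a + 1) (b + 1)) =
        f (a + 1) (b + 1) - f a (b + 1))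
    (stepB : ∀ a b : ℕ, a + 2 ≤ n - k → b + 1 ≤ k → (a : ℤ) - b = d →
      y a (b + 1) * y (a + 2) b / (y (a + 1) b * y (a + 1) (b + 1)) =
        f (a + 1) (b + 1) - f (a + 1) b)
    (start : ∀ a b, a < n - k → a = 0 ∨ b = 0 → f a b = 0)
    (finish : ∀ a b, 0 < a → a ≤ n - k → a = n - k ∨ b = k → f a b = T) :
    sumA k n y d + sumB k n y d = T := by
  -- The values of `f` along the staircase `…, (a, b), (a + 1, b), (a + 1, b + 1), …`, `a - b = d`.
  let stair (p : ℕ) : ℂ := f (((p + 1) / 2 : ℕ) + d).toNat (p / 2)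
  have stair_first : stair (max 1 (-2 * d).toNat) = 0 := start _ _ (by omega) (by omega)
  have stair_last : stair (min (2 * k) (2 * ((n : ℤ) - k - d) - 1).toNat) = T :=
    finish _ _ (by omega) (by omega) (by omega)
  have evenStep (a b : ℕ) (ha : a + 1 ≤ n - k) (hb : b + 2 ≤ k)
      (hab : (a : ℤ) - (b + 1 : ℕ) = d) :
      y a (b + 2) * y (a + 1) b / (y a (b + 1) * y (a + 1) (b + 1)) =
        stair (2 * (b + 1) + 1) - stair (2 * (b + 1)) := by
    rw [stepA a b ha hb hab]
    congr 2 <;> omega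
  have oddStep (a b : ℕ) (ha : a + 2 ≤ n - k) (hb : b + 1 ≤ k) (hab : (a : ℤ) - b = d) :
      y a (b + 1) * y (a + 2) b / (y (a + 1) b * y (a + 1) (b + 1)) =
        stair (2 * b + 1 + 1) - stair (2 * b + 1) := by
    rw [stepB a b ha hb hab]
    congr 2 <;> omega
  rw [sumA_eq_sum_even (g := fun p => stair (p + 1) - stair p) hk hkn hd' evenStep,
    sumB_eq_sum_odd (g := fun p => stair (p + 1) - stair p) hkn hd' oddStep,
    Finset.sum_filter_add_sum_filter_not, Finset.sum_Ico_sub stair (by omega), stair_first,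
    stair_last, sub_zero]

theorem sumA_add_sumB_eq_cyclicRatio {B : Matrix (Fin (n - k)) ℤ ℂ} (hB : IsTwistedPeriodic n B)
    (hk : 0 < k) (hkn : k < n) (hd : 1 - (k : ℤ) ≤ d) (hd' : d ≤ (n : ℤ) - k - 2) (c : ℤ)
    (y_eq : ∀ a ≤ n - k, ∀ b ≤ k, y a b = gapMinor B (c + ((a : ℤ) - b - d) / 2) a b)
    (y_ne_zero : ∀ a ≤ n - k, ∀ b ≤ k, y a b ≠ 0) :
    sumA k n y d + sumB k n y d = cyclicRatio B (c + k) := by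
  have y_eq' {a b : ℕ} {e : ℤ} (ha : a ≤ n - k) (hb : b ≤ k)
      (he : c + ((a : ℤ) - b - d) / 2 = e) : y a b = gapMinor B e a b :=
    he ▸ y_eq a ha b hb
  refine sumA_add_sumB_of_telescoping (f := shiftRatio B c) hk hkn hd hd'
    (fun a b ha hb hab => ?_) (fun a b ha hb hab => ?_) ?_ ?_
  · have ne := y_ne_zero a (by omega) (b + 1) (by omega)
    have ne' := y_ne_zero (a + 1) (by omega) (b + 1) (by omega)
    rw [y_eq' (e := c) (by omega) (by omega) (by omega)] at ne ne'
    rw [shiftRatio_succ_left_sub hB c b ha ne ne', y_eq' (e := c - 1) (b := b + 2),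
      y_eq' (e := c + 1) (b := b), y_eq' (e := c) (a := a) (b := b + 1),
      y_eq' (e := c) (a := a + 1) (b := b + 1)] <;> omega
  · have ne := y_ne_zero (a + 1) (by omega) b (by omega)
    have ne' := y_ne_zero (a + 1) (by omega) (b + 1) (by omega)
    rw [y_eq' (e := c) (by omega) (by omega) (by omega)] at ne ne'
    rw [shiftRatio_succ_right_sub hB c b ha ne ne', y_eq' (e := c - 1) (a := a),
      y_eq' (e := c + 1) (a := a + 2), y_eq' (e := c) (b := b),
      y_eq' (e := c) (b := b + 1)] <;> omega
  · rintro a b ha (rfl | rfl)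
    · exact shiftRatio_zero_left B c b
    · exact shiftRatio_zero_right B c ha
  · exact fun a b => shiftRatio_eq_cyclicRatio hB (by omega) c

theorem sumA_dual (k n : ℕ) (y : ℕ → ℕ → ℂ) (d : ℤ) :
    sumA k n y d = sumA k n (fun a b => y (n - k - a) (k - b)) ((n - k : ℕ) - k - 1 - d) := by
  refine Finset.sum_nbij' (fun p => (n - k - 1 - p.1, k - p.2))
    (fun p => (n - k - 1 - p.1, k - p.2)) ?_ ?_ ?_ ?_ ?_
  all_goals
    simp only [Prod.forall, Finset.mem_filter, Finset.mem_product, Finset.mem_range,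
      Finset.mem_Icc, Prod.mk.injEq]
  case refine_5 =>
    intro a b h
    rw [mul_comm (y a (b + 1)), mul_comm (y a b)]
    congr 3 <;> omega
  all_goals omega

theorem sumB_dual (k n : ℕ) (y : ℕ → ℕ → ℂ) (d : ℤ) :
    sumB k n y d = sumB k n (fun a b => y (n - k - a) (k - b)) ((n - k : ℕ) - k - 1 - d) := by
  refine Finset.sum_nbij' (fun p => (n - k - p.1, k + 1 - p.2))
    (fun p => (n - k - p.1, k + 1 - p.2)) ?_ ?_ ?_ ?_ ?_
  all_goals
    simp only [Prod.forall, Finset.mem_filter, Finset.mem_product, Finset.mem_Icc, Prod.mk.injEq]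
  case refine_5 =>
    intro a b h
    rw [mul_comm (y (a - 1) b), mul_comm (y a (b - 1))]
    congr 3 <;> omega
  all_goals omega

end DiagonalSums

section DiagonalIndex

variable {n k : ℕ}

/-- The index `i` (to be read modulo `n`) of the summand `p_{J_i⁺} / p_{J_i}` of the superpotential
to which the contributions of the diagonal `a - b = d` of the checkboard rotated by `m` add up. -/
def diagIndex (k : ℕ) (m d : ℤ) : ℤ :=
  if 2 ∣ d then m + d / 2 + k else m - (d + 1) / 2

theorem diagIndex_neg (k : ℕ) (m : ℤ) : diagIndex k m (-k) = m - ((k + 1) / 2 : ℕ) + k := by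
  unfold diagIndex
  split_ifs <;> omega

theorem intCast_diagIndex_last (n k : ℕ) (m : ℤ) :
    (diagIndex k m (n - k - 1) : ZMod n) = (m - ((n + k + 1) / 2 : ℕ) + k : ℤ) := by
  rw [← sub_eq_zero, ← Int.cast_sub, ZMod.intCast_zmod_eq_zero_iff_dvd]
  unfold diagIndex
  split_ifs with even
  · exact ⟨1, by omega⟩
  · exact ⟨0, by omega⟩

theorem intCast_sub_add_eq_natCast_iff (m c : ℤ) :
    ((m - c + k : ℤ) : ZMod n) = k ↔ (m : ZMod n) = c := by
  push_cast
  rw [add_eq_right, sub_eq_zero]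

theorem epsExp_eq_ite_diagIndex (n k : ℕ) (m d : ℤ) :
    epsExp n k m d = if (diagIndex k m d : ZMod n) = k then 1 else 0 := by
  by_cases even : 2 ∣ d
  · have index : m + d / 2 + k = m - -(d / 2) + k := by ring
    simp only [epsExp, diagIndex, even, if_true, index, intCast_sub_add_eq_natCast_iff, true_and,
      not_true, false_and, if_false, add_zero]
  · have index : m - (d + 1) / 2 = m - ((d + 1) / 2 + k) + k := by ring
    simp only [epsExp, diagIndex, even, if_false, false_and, not_false_eq_true, true_and, zero_add]
    simp only [index, intCast_sub_add_eq_natCast_iff]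

theorem injOn_intCast_diagIndex (n k : ℕ) (m : ℤ) :
    Set.InjOn (fun d => (diagIndex k m d : ZMod n))
      (Finset.Icc (-(k : ℤ)) ((n : ℤ) - k - 1)) := by
  intro d hd e he heq
  rw [Finset.coe_Icc, Set.mem_Icc] at hd he
  simp only [diagIndex] at heq
  split_ifs at heq
  all_goals
    rw [intCast_inj_of_abs_sub_lt (abs_lt.2 (by omega))] at heq
    omega

theorem natCast_eq_natCast_iff_of_mem_Icc {i j : ℕ} (hi : i ∈ Finset.Icc 1 n)
    (hj : j ∈ Finset.Icc 1 n) : (i : ZMod n) = j ↔ i = j := by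
  rw [Finset.mem_Icc] at hi hj
  have := intCast_inj_of_abs_sub_lt (n := n) (a := i) (b := j) (abs_lt.2 (by omega))
  exact_mod_cast this

theorem sum_comp_eq_sum_univ_of_injOn {ι α M : Type*} [Fintype α] [AddCommMonoid M]
    {S : Finset ι} {g : ι → α} (hS : S.card = Fintype.card α) (hg : Set.InjOn g S) (F : α → M) :
    ∑ d ∈ S, F (g d) = ∑ x, F x := by
  classical
  have image_eq : S.image g = Finset.univ :=
    Finset.eq_univ_of_card _ (by rw [Finset.card_image_of_injOn hg, hS])
  rw [← image_eq, Finset.sum_image hg]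

theorem sum_natCast_eq_sum_diagIndex [NeZero n] {M : Type*} [AddCommMonoid M] (k : ℕ) (m : ℤ)
    (F : ZMod n → M) :
    ∑ i ∈ Finset.Icc 1 n, F i =
      ∑ d ∈ Finset.Icc (-(k : ℤ)) ((n : ℤ) - k - 1), F (diagIndex k m d) := by
  have injOn_natCast : Set.InjOn (fun i : ℕ => (i : ZMod n)) (Finset.Icc 1 n) :=
    fun i hi j hj => (natCast_eq_natCast_iff_of_mem_Icc hi hj).1
  rw [sum_comp_eq_sum_univ_of_injOn (by simp [ZMod.card]) injOn_natCast,
    sum_comp_eq_sum_univ_of_injOn (by simp [ZMod.card]) (injOn_intCast_diagIndex n k m)]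

theorem sum_Icc_eq_add_add_sum {M : Type*} [AddCommMonoid M] {a b : ℤ} (hab : a < b)
    (f : ℤ → M) :
    ∑ d ∈ Finset.Icc a b, f d = f a + f b + ∑ d ∈ Finset.Icc (a + 1) (b - 1), f d := by
  have insert_ends : Finset.Icc a b = insert a (insert b (Finset.Icc (a + 1) (b - 1))) := by
    ext x
    simp only [Finset.mem_insert, Finset.mem_Icc]
    omega
  rw [insert_ends, Finset.sum_insert (by simp; omega), Finset.sum_insert (by simp), add_assoc]

end DiagonalIndex

section Superpotential

theorem gapMinor_one_div_gapMinor_zero {K : Type*} [Field K] {n r k : ℕ} {B : Matrix (Fin r) ℤ K}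
    (hB : IsTwistedPeriodic n B) (hn : r + k = n) (hk : 0 < k) (e : ℤ) :
    gapMinor B (e + 1) 1 (k - 1) / gapMinor B e 0 k = cyclicRatio B (e + k) := by
  have next : e + k + r + 1 = e + 1 + n := by omega
  have start : e + 1 + (k - 1 : ℕ) = e + k := by omega
  have single : intervalList (e + 1 - (1 : ℕ)) 1 = [e + 1] :=
    intervalList_eq_cons (by ring) rfl
  rw [cyclicRatio, next, columnMinor_append_singleton_add hB, gapMinor, gapMinor, single, start,
    intervalList_zero, List.nil_append, Nat.sub_zero, List.singleton_append]

theorem gapMinor_pred_div_gapMinor {K : Type*} [Field K] {r : ℕ} (B : Matrix (Fin r) ℤ K)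
    (hr : 0 < r) (x : ℤ) :
    gapMinor B (x + r - 1) (r - 1) 1 / gapMinor B (x + r) r 0 = cyclicRatio B x := by
  have start : x + r - 1 - (r - 1 : ℕ) = x := by omega
  have single : intervalList (x + r - 1 + (1 : ℕ)) (r - (r - 1)) = [x + r + 1] :=
    intervalList_eq_cons (l' := 0) (by push_cast; ring) (by omega)
  rw [cyclicRatio, gapMinor, gapMinor, start, single, Nat.sub_self, intervalList_zero,
    List.append_nil, add_sub_cancel_right]

/-- The quotient `p_{J_i⁺}(A) / p_{J_i}(A)`. -/
noncomputable def labelRatio {n k : ℕ} (A : Matrix (Fin (n - k)) (ZMod n) ℂ) (i : ZMod n) : ℂ :=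
  plucker n (n - k) A (Jplus n k i) / plucker n (n - k) A (Jcyc n k i)

variable {n k : ℕ} [NeZero n]

theorem ychRot_one_div_ychRot_zero (hk : 0 < k) (hkn : k < n) (m : ℤ)
    (A : Matrix (Fin (n - k)) (ZMod n) ℂ) :
    ychRot k n m A 1 (k - 1) / ychRot k n m A 0 k =
      labelRatio A (m - ((k + 1) / 2 : ℕ) + k : ℤ) := by
  have shift : m + (((1 : ℕ) : ℤ) - (k - 1 : ℕ)) / 2 = m - ((k + 1) / 2 : ℕ) + 1 := by omega
  have shift' : m + (((0 : ℕ) : ℤ) - k) / 2 = m - ((k + 1) / 2 : ℕ) := by omega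
  rw [labelRatio, plucker_Jplus_div_plucker_Jcyc hk hkn,
    ychRot_eq_gapMinor hkn.le (by omega) (by omega),
    ychRot_eq_gapMinor hkn.le (by omega) (by omega), shift, shift',
    gapMinor_one_div_gapMinor_zero (isTwistedPeriodic_twistedExtension A) (by omega) hk]

theorem ychRot_pred_div_ychRot_last (hk : 0 < k) (hkn : k < n) (m : ℤ)
    (A : Matrix (Fin (n - k)) (ZMod n) ℂ) :
    ychRot k n m A (n - k - 1) 1 / ychRot k n m A (n - k) 0 =
      labelRatio A (m - ((n + k + 1) / 2 : ℕ) + k : ℤ) := by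
  rw [labelRatio, plucker_Jplus_div_plucker_Jcyc hk hkn, ← gapMinor_pred_div_gapMinor _ (by omega),
    ychRot_eq_gapMinor hkn.le (by omega) (by omega),
    ychRot_eq_gapMinor hkn.le (by omega) (by omega)]
  congr 2 <;> omega

theorem sumA_add_sumB_ychRot (hk : 0 < k) (hkn : k < n) {m : ℤ}
    {A : Matrix (Fin (n - k)) (ZMod n) ℂ} (hy : ∀ i ≤ n - k, ∀ j ≤ k, ychRot k n m A i j ≠ 0)
    {d : ℤ} (hd : 1 - (k : ℤ) ≤ d) (hd' : d ≤ (n : ℤ) - k - 2) :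
    sumA k n (ychRot k n m A) d + sumB k n (ychRot k n m A) d =
      labelRatio A (diagIndex k m d : ℤ) := by
  have hB := isTwistedPeriodic_twistedExtension A
  unfold diagIndex
  split_ifs with even
  · rw [labelRatio, plucker_Jplus_div_plucker_Jcyc hk hkn]
    refine sumA_add_sumB_eq_cyclicRatio hB hk hkn hd hd' _ (fun a ha b hb => ?_) hy
    rw [ychRot_eq_gapMinor hkn.le ha hb]
    congr 1
    omega
  · have index : ((m - (d + 1) / 2 : ℤ) : ZMod n) = (m + (n - k : ℕ) - (d + 1) / 2 + k : ℤ) := by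
      rw [← add_zero ((m - (d + 1) / 2 : ℤ) : ZMod n), ← ZMod.natCast_self n, ← Int.cast_natCast,
        ← Int.cast_add]
      congr 1
      omega
    rw [index, labelRatio, plucker_Jplus_div_plucker_Jcyc hk hkn, sumA_dual, sumB_dual]
    refine sumA_add_sumB_eq_cyclicRatio hB hk hkn (by omega) (by omega) _ (fun a ha b hb => ?_)
      fun _ _ _ _ => hy _ (Nat.sub_le _ _) _ (Nat.sub_le _ _)
    rw [ychRot_eq_gapMinor hkn.le (Nat.sub_le _ _) (Nat.sub_le _ _),
      gapMinor_dual hB (Nat.sub_add_cancel hkn.le) _ (Nat.sub_le _ _) (Nat.sub_le _ _),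
      Nat.sub_sub_self ha, Nat.sub_sub_self hb]
    congr 1
    omega

end Superpotential

/-- the superpotential of the Grassmannian, expressed in the Plücker
coordinates attached to the rotated checkboard graph `σ^m G^ch_{k,n}`. -/
theorem superpotential_rotated_checkboard
    (n k : ℕ) (hn : 4 ≤ n) (hk : 2 ≤ k) (hkn : k ≤ n - 2) (m : ℤ)
    (A : Matrix (Fin (n - k)) (ZMod n) ℂ)
    (hy : ∀ i ≤ n - k, ∀ j ≤ k, ychRot k n m A i j ≠ 0)
    (q : ℂ) :
    (∑ i ∈ Finset.Icc 1 n,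
        (plucker n (n - k) A (Jplus n k (i : ZMod n)) /
          plucker n (n - k) A (Jcyc n k (i : ZMod n))) * q ^ (if i = k then 1 else 0)) =
      (ychRot k n m A 1 (k - 1) / ychRot k n m A 0 k) *
        q ^ (if (m : ZMod n) = (((k + 1) / 2 : ℕ) : ZMod n) then 1 else 0) +
      (ychRot k n m A (n - k - 1) 1 / ychRot k n m A (n - k) 0) *
        q ^ (if (m : ZMod n) = (((n + k + 1) / 2 : ℕ) : ZMod n) then 1 else 0) +
      ∑ d ∈ Finset.Icc (1 - (k : ℤ)) ((n : ℤ) - k - 2),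
        (sumA k n (ychRot k n m A) d + sumB k n (ychRot k n m A) d) * q ^ (epsExp n k m d) := by
  have : NeZero n := ⟨by omega⟩
  have pos : 0 < k := by omega
  have lt : k < n := by omega
  let F (i : ZMod n) : ℂ := labelRatio A i * q ^ (if i = k then 1 else 0)
  calc
    _ = ∑ i ∈ Finset.Icc 1 n, F i := Finset.sum_congr rfl fun i hi => by
      simp only [F, labelRatio,
        natCast_eq_natCast_iff_of_mem_Icc hi (Finset.mem_Icc.2 ⟨pos, lt.le⟩)]
    _ = F (diagIndex k m (-k)) + F (diagIndex k m (n - k - 1)) +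
        ∑ d ∈ Finset.Icc (1 - (k : ℤ)) ((n : ℤ) - k - 2), F (diagIndex k m d) := by
      rw [sum_natCast_eq_sum_diagIndex k m, sum_Icc_eq_add_add_sum (by omega)]
      ring_nf
    _ = _ := by
      refine congrArg₂ _ (congrArg₂ _ ?_ ?_) (Finset.sum_congr rfl fun d hd => ?_)
      · simp only [F, diagIndex_neg, intCast_sub_add_eq_natCast_iff, Int.cast_natCast,
          ychRot_one_div_ychRot_zero pos lt]
      · simp only [F, intCast_diagIndex_last, intCast_sub_add_eq_natCast_iff, Int.cast_natCast,
          ychRot_pred_div_ychRot_last pos lt]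
      · obtain ⟨first_le, le_last⟩ := Finset.mem_Icc.1 hd
        rw [sumA_add_sumB_ychRot pos lt hy first_le le_last, epsExp_eq_ite_diagIndex]
end

section
/- Let n ≥ 4 and 2 ≤ k ≤ n−2 be integers and let m be an integer. Let L = { σ^m J^ch_{i,j} : 0 ≤ i ≤ n−k, 0 ≤ j ≤ k } ∖ { J_n }, a set of exactly k(n−k) labels, and for v ∈ ℝ^L write v_{i,j} = v(σ^m J^ch_{i,j}) if σ^m J^ch_{i,j} ≠ J_n and v_{i,j} = 0 if σ^m J^ch_{i,j} = J_n. Let Γ_m ⊆ ℝ^L be the superpotential polytope defined by the inequalities: δ(m ≡ ⌈k/2⌉) ≥ v_{0,k} − v_{1,k−1}; δ(m ≡ ⌈(n+k)/2⌉) ≥ v_{n−k,0} − v_{n−k−1,1}; ε_{m,a−b} ≥ v_{a,b} − v_{a+1,b−1} − v_{a,b+1} + v_{a+1,b} for all 0 ≤ a ≤ n−k−1, 1 ≤ b ≤ k−1; and ε_{m,a−b} ≥ v_{a,b} − v_{a+1,b−1} − v_{a−1,b} + v_{a,b−1} for all 1 ≤ a ≤ n−k−1, 1 ≤ b ≤ k,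 where ε_{m,d} = δ(d even and m ≡ −d/2 mod n) + δ(d odd and m ≡ (d+1)/2 + k mod n) and δ(P) = 1 if P holds and 0 otherwise. Let GT ⊆ ℝ^{k(n−k)}, with coordinates f_{a,b} for 0 ≤ a ≤ n−k−1 and 1 ≤ b ≤ k, be the polytope defined by: f_{0,k} ≤ 1; f_{n−k−1,1} ≥ 0; f_{a,b} ≤ f_{a,b+1} for all 0 ≤ a ≤ n−k−1, 1 ≤ b ≤ k−1; and f_{a,b} ≤ f_{a−1,b} for all 1 ≤ a ≤ n−k−1, 1 ≤ b ≤ k. Then Γ_m is unimodular equivalent to GT: there exist a ℤ-linear bijection M between the coordinate lattices ℤ^L and ℤ^{k(n−k)} and an integer vector t ∈ ℤ^{k(n−k)} such that the affine map v ↦ M(v) + t maps Γ_m bijectively onto GT. -/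
open Finset

/-- The label set `L`: all labels `σ^m J^ch_{i,j}` with the frozen label
`J_n = [n−k]` removed. -/
def Lset (k n : ℕ) (m : ℤ) : Finset (Finset (ZMod n)) :=
  (((Finset.range (n - k + 1)) ×ˢ (Finset.range (k + 1))).image
    (fun p => JchRot k n m p.1 p.2)) \ {seg n (n - k)}

/-- The coordinate `v_{i,j}` of `v ∈ ℝ^L`:  the value of `v` at the label
`σ^m J^ch_{i,j}` if that label lies in `L`, and `0` if the label is `J_n`. -/
def Vco (k n : ℕ) (m : ℤ) (v : ↥(Lset k n m) → ℝ) (i j : ℕ) : ℝ :=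
  if h : JchRot k n m i j ∈ Lset k n m then v ⟨JchRot k n m i j, h⟩ else 0

/-- The exponent `ε_{m,d}`, as a real number. -/
noncomputable def epsExpR (n k : ℕ) (m d : ℤ) : ℝ :=
  (if 2 ∣ d ∧ (m : ZMod n) = ((-(d / 2) : ℤ) : ZMod n) then 1 else 0) +
  (if ¬ 2 ∣ d ∧ (m : ZMod n) = (((d + 1) / 2 + (k : ℤ) : ℤ) : ZMod n) then 1 else 0)

/-- The superpotential polytope `Γ_m ⊆ ℝ^L` of the rotated checkboard graph
`σ^m G^ch_{k,n}` (equal to its Newton–Okounkov body by Rietsch–Williams). -/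
noncomputable def GammaPoly (k n : ℕ) (m : ℤ) : Set (↥(Lset k n m) → ℝ) :=
  {v |
    (Vco k n m v 0 k - Vco k n m v 1 (k - 1) ≤
      (if (m : ZMod n) = (((k + 1) / 2 : ℕ) : ZMod n) then (1 : ℝ) else 0)) ∧
    (Vco k n m v (n - k) 0 - Vco k n m v (n - k - 1) 1 ≤
      (if (m : ZMod n) = (((n + k + 1) / 2 : ℕ) : ZMod n) then (1 : ℝ) else 0)) ∧
    (∀ a b : ℕ, a ≤ n - k - 1 → 1 ≤ b → b ≤ k - 1 →
      Vco k n m v a b - Vco k n m v (a + 1) (b - 1) - Vco k n m v a (b + 1) +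
          Vco k n m v (a + 1) b ≤ epsExpR n k m ((a : ℤ) - (b : ℤ))) ∧
    (∀ a b : ℕ, 1 ≤ a → a ≤ n - k - 1 → 1 ≤ b → b ≤ k →
      Vco k n m v a b - Vco k n m v (a + 1) (b - 1) - Vco k n m v (a - 1) b +
          Vco k n m v a (b - 1) ≤ epsExpR n k m ((a : ℤ) - (b : ℤ)))}

/-- The Gelfand–Tsetlin polytope `GT ⊆ ℝ^{k(n−k)}`, with coordinates `f_{a,b}` for
`0 ≤ a ≤ n−k−1`, `1 ≤ b ≤ k` encoded as `f (a, b−1)`.  It is defined by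
`f_{0,k} ≤ 1`, `f_{n−k−1,1} ≥ 0`, `f_{a,b} ≤ f_{a,b+1}` and `f_{a,b} ≤ f_{a−1,b}`. -/
def GTPoly (k n : ℕ) (hnk : 0 < n - k) (hk : 0 < k) :
    Set (Fin (n - k) × Fin k → ℝ) :=
  {f |
    f (⟨0, hnk⟩, ⟨k - 1, by omega⟩) ≤ 1 ∧
    0 ≤ f (⟨n - k - 1, by omega⟩, ⟨0, hk⟩) ∧
    (∀ (a : Fin (n - k)) (b : Fin k) (hb : (b : ℕ) + 1 < k),
      f (a, b) ≤ f (a, ⟨(b : ℕ) + 1, hb⟩)) ∧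
    (∀ (a : Fin (n - k)) (b : Fin k), 0 < (a : ℕ) →
      f (a, b) ≤ f (⟨(a : ℕ) - 1, by omega⟩, b))}

/-!
The labels on the antidiagonal `i + j = s` are unions of at most two cyclic intervals, and these
can only begin right after `m + zigzag s` or `m + zigzag (s - 1)`, where `zigzag` runs through
`0, -1, 1, -2, 2, …`.  A boundary label is a single cyclic interval, and the one beginning right
after `m + zigzag s` occurs on both antidiagonals `s` and `s + 1`; since `zigzag` enumerates
`ℤ/nℤ`, one of these is the frozen label `J_n`.

Consequently the differences `u_{a,b} = v_{a,b} - v_{a+1,b-1}` determine `v`, over `ℤ` as well as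
over `ℝ`: they determine it up to a constant along each antidiagonal, shared labels tie these
constants together, and the value `0` at `J_n` fixes the last one.  The left endpoints distinguish
`k (n - k) + 1` labels, so `v ↦ u` is a unimodular isomorphism.  In the coordinates `u`, the
inequalities of `Γ_m` bound by `ε_{m,a-b}` the same differences that Gelfand–Tsetlin patterns
require to be nonpositive.  Since `∑_d ε_{m,d} = 1`, translating `u_{a,b}` by the tail sum
`∑_{e > a-b} ε_{m,e}` turns one system into the other.
-/

section Zigzag

/-- The enumeration `0, -1, 1, -2, 2, …` of `ℤ`.  The left endpoints of the labels on the
antidiagonals `0, 1, 2, …` of the checkboard grid appear in this order. -/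
def zigzag (s : ℕ) : ℤ :=
  if Even s then s / 2 else -((s + 1) / 2)

theorem zigzag_of_even {s : ℕ} (hs : Even s) : zigzag s = s / 2 := if_pos hs

theorem zigzag_of_odd {s : ℕ} (hs : Odd s) : zigzag s = -((s + 1) / 2) :=
  if_neg (Nat.not_even_iff_odd.mpr hs)

theorem zigzag_eq_floor_or_neg_ceil (s : ℕ) :
    (zigzag s = s / 2 ∧ zigzag (s - 1) = -((s + 1) / 2)) ∨
      (zigzag s = -((s + 1) / 2) ∧ zigzag (s - 1) = s / 2) := by
  grind [zigzag]

theorem zigzag_injective : Function.Injective zigzag := by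
  intro s t hst
  grind [zigzag]

theorem abs_zigzag_sub_lt {n s t : ℕ} (hs : s < n) (ht : t < n) :
    |zigzag s - zigzag t| < n := by
  grind [zigzag]

theorem eq_of_intCast_zmod_eq {n : ℕ} {a b : ℤ} (hab : (a : ZMod n) = b) (hlt : |a - b| < n) :
    a = b := by
  rw [eq_comm, ZMod.intCast_eq_intCast_iff_dvd_sub] at hab
  exact sub_eq_zero.mp (Int.eq_zero_of_abs_lt_dvd hab hlt)

theorem eq_of_zigzag_cast_eq {n s t : ℕ} (hs : s < n) (ht : t < n)
    (hst : (zigzag s : ZMod n) = zigzag t) : s = t :=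
  zigzag_injective (eq_of_intCast_zmod_eq hst (abs_zigzag_sub_lt hs ht))

theorem zigzag_cast_bijective (n : ℕ) [NeZero n] :
    Function.Bijective fun s : Fin n => (zigzag s : ZMod n) := by
  rw [Fintype.bijective_iff_injective_and_card]
  exact ⟨fun s t hst => Fin.ext (eq_of_zigzag_cast_eq s.2 t.2 hst), by simp [ZMod.card]⟩

end Zigzag

section Membership

theorem Jcyc_eq_image_seg (k n : ℕ) (c : ZMod n) : Jcyc n k c = (seg n (n - k)).image (c + ·) := by
  rw [seg, Finset.image_image]
  rfl

theorem Jcyc_zero (k n : ℕ) : Jcyc n k 0 = seg n (n - k) := by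
  simp [Jcyc_eq_image_seg]

variable {k n : ℕ} [NeZero n]

theorem val_sub_natCast (x : ZMod n) {t : ℕ} (ht : t ≤ n) :
    (x - (t : ZMod n)).val = if t ≤ x.val then x.val - t else x.val + n - t := by
  have hx := x.val_lt
  split_ifs with htx
  · have hcast : x - (t : ZMod n) = ((x.val - t : ℕ) : ZMod n) := by
      rw [Nat.cast_sub htx, ZMod.natCast_zmod_val]
    rw [hcast, ZMod.val_natCast_of_lt (by omega)]
  · have hcast : x - (t : ZMod n) = ((x.val + n - t : ℕ) : ZMod n) := by
      rw [Nat.cast_sub (by omega), Nat.cast_add, ZMod.natCast_zmod_val, ZMod.natCast_self, add_zero]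
    rw [hcast, ZMod.val_natCast_of_lt (by omega)]

theorem add_one_mem_seg {t : ℕ} (ht : t ≤ n) (x : ZMod n) : x + 1 ∈ seg n t ↔ x.val < t := by
  simp only [seg, Finset.mem_image, Finset.mem_Icc]
  constructor
  · rintro ⟨r, ⟨hr, hrt⟩, hrx⟩
    have hx : x = ((r - 1 : ℕ) : ZMod n) := by
      rw [Nat.cast_sub hr, hrx, Nat.cast_one, add_sub_cancel_right]
    rw [hx, ZMod.val_natCast_of_lt (by omega)]
    omega
  · intro hx
    exact ⟨x.val + 1, ⟨by omega, by omega⟩, by simp⟩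

theorem add_one_mem_Jcyc (c x : ZMod n) : x + 1 ∈ Jcyc n k c ↔ (x - c).val < n - k := by
  rw [← add_one_mem_seg (Nat.sub_le n k), Jcyc_eq_image_seg]
  simp only [Finset.mem_image]
  constructor
  · rintro ⟨y, hy, hyx⟩
    rwa [show x - c + 1 = y by linear_combination -hyx]
  · intro hx
    exact ⟨_, hx, by ring⟩

end Membership

section Labels

/-- The rotation by `m - ⌈s/2⌉` that carries `[i] ∪ ([n-k+j] ∖ [i+j])` with `i + j = s` to the
label `σ^m J^ch_{i,j}`. -/
def antidiagShift (n : ℕ) (m : ℤ) (s : ℕ) : ZMod n :=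
  m + (-((s + 1) / 2) : ℤ)

theorem antidiagShift_add_natCast (n : ℕ) (m : ℤ) (s : ℕ) :
    antidiagShift n m s + s = m + (s / 2 : ℤ) := by
  have half_add_half : (s : ℤ) = s / 2 + (s + 1) / 2 := by omega
  have hcast := congrArg (Int.cast : ℤ → ZMod n) half_add_half
  push_cast at hcast
  rw [antidiagShift, hcast]
  push_cast
  ring

theorem JchRot_eq_image (k n : ℕ) (m : ℤ) (i j : ℕ) :
    JchRot k n m i j = (seg n i ∪ (seg n (n - k + j) \ seg n (i + j))).image
      (· + antidiagShift n m (i + j)) := by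
  have ceil_cast : (((i + j + 1) / 2 : ℕ) : ZMod n) = ((((i + j : ℕ) + 1) / 2 : ℤ) : ZMod n) :=
    (Int.cast_natCast _).symm
  rw [JchRot, Jch, Finset.image_image]
  congr 1
  funext x
  rw [Function.comp_apply, antidiagShift, ceil_cast, Int.cast_neg]
  ring

/-- `c` is a left endpoint of `J` when a maximal cyclic interval contained in `J` starts at
`c + 1`, the convention for which the cyclic interval `J_c` has left endpoint `c`. -/
def IsLeftEndpoint {n : ℕ} (J : Finset (ZMod n)) (c : ZMod n) : Prop :=
  c + 1 ∈ J ∧ c ∉ J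

variable {k n : ℕ} [NeZero n] {m : ℤ} {i j : ℕ}

theorem add_one_mem_JchRot (hkn : k ≤ n) (hi : i ≤ n - k) (hj : j ≤ k) (x : ZMod n) :
    x + 1 ∈ JchRot k n m i j ↔
      (x - antidiagShift n m (i + j)).val < i ∨
        i + j ≤ (x - antidiagShift n m (i + j)).val ∧
          (x - antidiagShift n m (i + j)).val < n - k + j := by
  rw [← sub_add_cancel (x + 1) (antidiagShift n m (i + j)), JchRot_eq_image,
    (add_left_injective (antidiagShift n m (i + j))).mem_finset_image, add_sub_right_comm,
    Finset.mem_union, Finset.mem_sdiff, add_one_mem_seg (by omega), add_one_mem_seg (by omega),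
    add_one_mem_seg (by omega), not_lt, and_comm (a := _ < n - k + j)]

theorem isLeftEndpoint_JchRot_iff (hk : 0 < k) (hkn : k < n) (hi : i ≤ n - k) (hj : j ≤ k)
    (y : ZMod n) :
    IsLeftEndpoint (JchRot k n m i j) (antidiagShift n m (i + j) + y) ↔
      y.val = 0 ∧ (0 < i ∧ (j < k ∨ i = n - k) ∨ i = 0 ∧ j = 0) ∨
        y.val = i + j ∧ i < n - k ∧ 0 < j := by
  have hy := y.val_lt
  have val_pred := val_sub_natCast y (t := 1) (by omega)
  rw [Nat.cast_one] at val_pred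
  rw [IsLeftEndpoint, add_one_mem_JchRot hkn.le hi hj, add_sub_cancel_left,
    ← sub_add_cancel (antidiagShift n m (i + j) + y) 1, add_one_mem_JchRot hkn.le hi hj,
    add_sub_assoc, add_sub_cancel_left, val_pred]
  split_ifs <;> omega

theorem eq_of_isLeftEndpoint_JchRot (hk : 0 < k) (hkn : k < n) (hi : i ≤ n - k) (hj : j ≤ k)
    {c : ZMod n} (hc : IsLeftEndpoint (JchRot k n m i j) c) :
    c = m + zigzag (i + j) ∨ c = m + zigzag (i + j - 1) := by
  obtain ⟨y, rfl⟩ : ∃ y, c = antidiagShift n m (i + j) + y :=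
    ⟨_, (add_sub_cancel _ _).symm⟩
  have hends : antidiagShift n m (i + j) + y = m + (-(((i + j : ℕ) + 1) / 2) : ℤ) ∨
      antidiagShift n m (i + j) + y = m + (((i + j : ℕ) / 2 : ℤ) : ZMod n) := by
    rw [isLeftEndpoint_JchRot_iff hk hkn hi hj] at hc
    rcases hc with ⟨hy, -⟩ | ⟨hy, -⟩
    · left
      rw [(ZMod.val_eq_zero y).mp hy, add_zero, antidiagShift]
    · right
      rw [← antidiagShift_add_natCast, ← hy, ZMod.natCast_zmod_val]
  rcases zigzag_eq_floor_or_neg_ceil (i + j) with ⟨hs, hpred⟩ | ⟨hs, hpred⟩ <;> rw [hs, hpred]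
  · exact hends.symm
  · exact hends

theorem JchRot_eq_Jcyc_of_first_row_or_last_col (hkn : k ≤ n) (hi : i ≤ n - k) (hj : j ≤ k)
    (hij : i = 0 ∨ j = k) : JchRot k n m i j = Jcyc n k (m + ((i + j : ℕ) / 2 : ℤ)) := by
  ext x
  have hx := (x - 1 - antidiagShift n m (i + j)).val_lt
  rw [← sub_add_cancel x 1, add_one_mem_JchRot hkn hi hj, add_one_mem_Jcyc,
    ← antidiagShift_add_natCast, ← sub_sub, val_sub_natCast _ (by omega)]
  split_ifs <;> omega

theorem JchRot_eq_Jcyc_of_last_row_or_first_col (hkn : k ≤ n) (hi : i ≤ n - k) (hj : j ≤ k)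
    (hij : i = n - k ∨ j = 0) : JchRot k n m i j = Jcyc n k (antidiagShift n m (i + j)) := by
  ext x
  rw [← sub_add_cancel x 1, add_one_mem_JchRot hkn hi hj, add_one_mem_Jcyc]
  omega

theorem exists_JchRot_eq_Jcyc {s t : ℕ} (hkn : k ≤ n) (hs : s ≤ n) (ht : t = s ∨ t = s - 1) :
    ∃ i ≤ n - k, ∃ j ≤ k, i + j = s ∧ JchRot k n m i j = Jcyc n k (m + zigzag t) := by
  have floor_side : ∃ i ≤ n - k, ∃ j ≤ k, i + j = s ∧
      JchRot k n m i j = Jcyc n k (m + (s / 2 : ℤ)) := by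
    obtain ⟨i, hi, j, hj, rfl, hij⟩ : ∃ i ≤ n - k, ∃ j ≤ k, i + j = s ∧ (i = 0 ∨ j = k) :=
      ⟨s - k, by omega, min s k, by omega, by omega, by omega⟩
    exact ⟨i, hi, j, hj, rfl, JchRot_eq_Jcyc_of_first_row_or_last_col hkn hi hj hij⟩
  have ceil_side : ∃ i ≤ n - k, ∃ j ≤ k, i + j = s ∧
      JchRot k n m i j = Jcyc n k (m + (-((s + 1) / 2) : ℤ)) := by
    obtain ⟨i, hi, j, hj, rfl, hij⟩ : ∃ i ≤ n - k, ∃ j ≤ k, i + j = s ∧ (i = n - k ∨ j = 0) :=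
      ⟨min s (n - k), by omega, s - (n - k), by omega, by omega, by omega⟩
    exact ⟨i, hi, j, hj, rfl, JchRot_eq_Jcyc_of_last_row_or_first_col hkn hi hj hij⟩
  rcases zigzag_eq_floor_or_neg_ceil s with ⟨hs, hpred⟩ | ⟨hs, hpred⟩ <;>
    rcases ht with rfl | rfl <;> simpa only [hs, hpred]

end Labels

section LabelCount

/-- One grid position for each label: on antidiagonals after the first, the positions whose label
already occurs on the previous antidiagonal are left out. -/
def primaryPos {a b : ℕ} : Option (Fin a × Fin b) → ℕ × ℕ
  | none => (0, 0)
  | some (x, y) => if Even (x + y : ℕ) then (x + 1, y) else (x, y + 1)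

theorem primaryPos_injective (a b : ℕ) :
    Function.Injective (primaryPos : Option (Fin a × Fin b) → ℕ × ℕ) := by
  rintro (_ | ⟨x, y⟩) (_ | ⟨x', y'⟩) hxy
  all_goals
    simp only [primaryPos] at hxy
    grind

theorem primaryPos_parity {a b : ℕ} (p : Option (Fin a × Fin b)) :
    (Even ((primaryPos p).1 + (primaryPos p).2) →
        ((primaryPos p).1 < a ∧ 0 < (primaryPos p).2) ∨
          ((primaryPos p).1 = 0 ∧ (primaryPos p).2 = 0)) ∧
      (Odd ((primaryPos p).1 + (primaryPos p).2) →
        0 < (primaryPos p).1 ∧ (primaryPos p).2 < b) := by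
  rcases p with _ | ⟨x, y⟩
  all_goals grind [primaryPos]

variable {k n : ℕ} {m : ℤ}

theorem primaryPos_mem_grid (hkn : k < n) (p : Option (Fin (n - k) × Fin k)) :
    (primaryPos p).1 ≤ n - k ∧ (primaryPos p).2 ≤ k ∧ (primaryPos p).1 + (primaryPos p).2 < n := by
  rcases p with _ | ⟨x, y⟩
  all_goals grind [primaryPos]

variable [NeZero n]

theorem eq_of_JchRot_eq_of_add_eq {i j i' j' : ℕ} (hkn : k ≤ n) (hi : i ≤ n - k) (hj : j ≤ k)
    (hi' : i' ≤ n - k) (hj' : j' ≤ k) (hs : i + j < n) (hadd : i + j = i' + j')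
    (hJ : JchRot k n m i j = JchRot k n m i' j') : i = i' := by
  have mem_iff (w : ℕ) (hw : w < n) :
      (w < i ∨ i + j ≤ w ∧ w < n - k + j) ↔ (w < i' ∨ i + j ≤ w ∧ w < n - k + j') := by
    have hx := Finset.ext_iff.mp hJ (antidiagShift n m (i + j) + w + 1)
    rwa [add_one_mem_JchRot hkn hi hj, add_one_mem_JchRot hkn hi' hj', ← hadd,
      add_sub_cancel_left, ZMod.val_natCast_of_lt hw] at hx
  have at_i := mem_iff i (by omega)
  have at_i' := mem_iff i' (by omega)
  omega

theorem isLeftEndpoint_primaryPos (hk : 0 < k) (hkn : k < n) (p : Option (Fin (n - k) × Fin k)) :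
    IsLeftEndpoint (JchRot k n m (primaryPos p).1 (primaryPos p).2)
      (m + zigzag ((primaryPos p).1 + (primaryPos p).2)) := by
  obtain ⟨hi, hj, hs⟩ := primaryPos_mem_grid hkn p
  obtain ⟨heven, hodd⟩ := primaryPos_parity p
  generalize (primaryPos p).1 = i at *
  generalize (primaryPos p).2 = j at *
  rcases Nat.even_or_odd (i + j) with hpar | hpar
  · rw [zigzag_of_even hpar, ← antidiagShift_add_natCast,
      isLeftEndpoint_JchRot_iff hk hkn hi hj, ZMod.val_natCast_of_lt hs]
    have := heven hpar
    omega
  · rw [zigzag_of_odd hpar, ← antidiagShift, ← add_zero (antidiagShift n m (i + j)),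
      isLeftEndpoint_JchRot_iff hk hkn hi hj, ZMod.val_zero]
    have := hodd hpar
    omega

theorem JchRot_primaryPos_injective (hk : 0 < k) (hkn : k < n) :
    Function.Injective fun p : Option (Fin (n - k) × Fin k) =>
      JchRot k n m (primaryPos p).1 (primaryPos p).2 := by
  have antidiag_eq_or (p q : Option (Fin (n - k) × Fin k))
      (hpq : JchRot k n m (primaryPos p).1 (primaryPos p).2 =
        JchRot k n m (primaryPos q).1 (primaryPos q).2) :
      (primaryPos p).1 + (primaryPos p).2 = (primaryPos q).1 + (primaryPos q).2 ∨
        (primaryPos p).1 + (primaryPos p).2 = (primaryPos q).1 + (primaryPos q).2 - 1 := by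
    obtain ⟨-, -, hp⟩ := primaryPos_mem_grid hkn p
    obtain ⟨hi, hj, hq⟩ := primaryPos_mem_grid hkn q
    have hend := isLeftEndpoint_primaryPos (m := m) hk hkn p
    rw [hpq] at hend
    exact (eq_of_isLeftEndpoint_JchRot hk hkn hi hj hend).imp
      (fun h => eq_of_zigzag_cast_eq hp hq (add_left_cancel h))
      (fun h => eq_of_zigzag_cast_eq hp (by omega) (add_left_cancel h))
  intro p q hpq
  have antidiag_eq :
      (primaryPos p).1 + (primaryPos p).2 = (primaryPos q).1 + (primaryPos q).2 := by
    have hpq_or := antidiag_eq_or p q hpq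
    have hqp_or := antidiag_eq_or q p hpq.symm
    omega
  obtain ⟨hi, hj, hs⟩ := primaryPos_mem_grid hkn p
  obtain ⟨hi', hj', -⟩ := primaryPos_mem_grid hkn q
  have row_eq := eq_of_JchRot_eq_of_add_eq hkn.le hi hj hi' hj' hs antidiag_eq hpq
  exact primaryPos_injective _ _ (Prod.ext row_eq (by omega))

theorem mul_le_card_Lset (hk : 0 < k) (hkn : k < n) : k * (n - k) ≤ (Lset k n m).card := by
  set labels := (Finset.range (n - k + 1) ×ˢ Finset.range (k + 1)).image
    fun p => JchRot k n m p.1 p.2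
  have maps_to : ∀ p ∈ (Finset.univ : Finset (Option (Fin (n - k) × Fin k))),
      JchRot k n m (primaryPos p).1 (primaryPos p).2 ∈ labels := by
    intro p _
    obtain ⟨hi, hj, -⟩ := primaryPos_mem_grid hkn p
    exact Finset.mem_image.mpr
      ⟨primaryPos p, by simp only [Finset.mem_product, Finset.mem_range]; omega, rfl⟩
  have card_labels : k * (n - k) + 1 ≤ labels.card := by
    simpa [mul_comm] using Finset.card_le_card_of_injOn _ maps_to
      (JchRot_primaryPos_injective hk hkn).injOn
  have card_sdiff : labels.card - 1 ≤ (Lset k n m).card := by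
    rw [← Finset.card_singleton (seg n (n - k))]
    exact Finset.le_card_sdiff {seg n (n - k)} labels
  omega

end LabelCount

section DifferenceCoordinates

theorem eq_of_add_eq_add_of_adjacent_eq {α : Type*} {N k : ℕ} {W : ℕ → ℕ → α}
    (hW : ∀ a < N, ∀ b < k, W a (b + 1) = W (a + 1) b) {i j i' j' : ℕ} (hi : i ≤ N) (hj : j ≤ k)
    (hi' : i' ≤ N) (hj' : j' ≤ k) (hadd : i + j = i' + j') : W i j = W i' j' := by
  wlog hle : i ≤ i' generalizing i j i' j'
  · exact (this hi' hj' hi hj hadd.symm (by omega)).symm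
  induction i', hle using Nat.le_induction generalizing j' with
  | base => rw [Nat.add_left_cancel hadd]
  | succ r _ ih =>
    rw [ih (j' := j' + 1) (by omega) (by omega) (by omega), hW r (by omega) j' (by omega)]

theorem eq_frozen_of_adjacent_eq {α : Type*} {k n : ℕ} [NeZero n] {m : ℤ}
    {F : Finset (ZMod n) → α} (hkn : k ≤ n)
    (hF : ∀ a < n - k, ∀ b < k, F (JchRot k n m a (b + 1)) = F (JchRot k n m (a + 1) b))
    {i j : ℕ} (hi : i ≤ n - k) (hj : j ≤ k) : F (JchRot k n m i j) = F (seg n (n - k)) := by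
  have eq_interval {i j t : ℕ} (hi : i ≤ n - k) (hj : j ≤ k) (ht : t = i + j ∨ t = i + j - 1) :
      F (JchRot k n m i j) = F (Jcyc n k (m + zigzag t)) := by
    obtain ⟨i', hi', j', hj', hadd, hJ⟩ :=
      exists_JchRot_eq_Jcyc (m := m) hkn (show i + j ≤ n by omega) ht
    rw [← hJ]
    exact eq_of_add_eq_add_of_adjacent_eq (W := fun i j => F (JchRot k n m i j)) hF
      hi hj hi' hj' hadd.symm
  have interval_eq {s : ℕ} (hs : s ≤ n) :
      F (Jcyc n k (m + zigzag s)) = F (Jcyc n k (m + zigzag 0)) := by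
    induction s with
    | zero => rfl
    | succ s ih =>
      have hi : s + 1 - k ≤ n - k := by omega
      have hj : min (s + 1) k ≤ k := min_le_right _ _
      rw [← ih (by omega), ← eq_interval hi hj (by omega), ← eq_interval hi hj (by omega)]
  obtain ⟨s, hs : (zigzag s : ZMod n) = -m⟩ := (zigzag_cast_bijective n).surjective (-m)
  calc F (JchRot k n m i j)
      = F (Jcyc n k (m + zigzag (i + j))) := eq_interval hi hj (.inl rfl)
    _ = F (Jcyc n k (m + zigzag s)) := by
        rw [interval_eq (by omega), interval_eq s.2.le]
    _ = F (seg n (n - k)) := by rw [hs, add_neg_cancel, Jcyc_zero]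

/-- The value of `v ∈ ℝ^L` at a label `J`, as a linear form in `v`; it is `0` outside `L`, in
particular at the frozen label. -/
def labelCoord (k n : ℕ) (m : ℤ) (J : Finset (ZMod n)) : (Lset k n m → ℝ) →ₗ[ℝ] ℝ :=
  if h : J ∈ Lset k n m then LinearMap.proj ⟨J, h⟩ else 0

/-- The map `v ↦ u` to the differences `u_{a,b} = v_{a,b} - v_{a+1,b-1}` along antidiagonals,
with `u_{a,b}` stored at `(a, b - 1)` as in `GTPoly`. -/
def antidiagDiff (k n : ℕ) (m : ℤ) : (Lset k n m → ℝ) →ₗ[ℝ] (Fin (n - k) × Fin k → ℝ) :=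
  LinearMap.pi fun p =>
    labelCoord k n m (JchRot k n m p.1 (p.2 + 1)) - labelCoord k n m (JchRot k n m (p.1 + 1) p.2)

variable {k n : ℕ} {m : ℤ}

theorem labelCoord_of_mem {J : Finset (ZMod n)} (hJ : J ∈ Lset k n m) (v : Lset k n m → ℝ) :
    labelCoord k n m J v = v ⟨J, hJ⟩ := by
  rw [labelCoord, dif_pos hJ, LinearMap.proj_apply]

theorem labelCoord_of_notMem {J : Finset (ZMod n)} (hJ : J ∉ Lset k n m) (v : Lset k n m → ℝ) :
    labelCoord k n m J v = 0 := by
  rw [labelCoord, dif_neg hJ, LinearMap.zero_apply]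

theorem labelCoord_mem {S : AddSubgroup ℝ} {v : Lset k n m → ℝ} (hv : ∀ J, v J ∈ S)
    (J : Finset (ZMod n)) : labelCoord k n m J v ∈ S := by
  by_cases hJ : J ∈ Lset k n m
  · rw [labelCoord_of_mem hJ]
    exact hv _
  · rw [labelCoord_of_notMem hJ]
    exact S.zero_mem

theorem Vco_eq_labelCoord (v : Lset k n m → ℝ) (i j : ℕ) :
    Vco k n m v i j = labelCoord k n m (JchRot k n m i j) v := by
  rw [Vco]
  split_ifs with hJ
  · rw [labelCoord_of_mem hJ]
  · rw [labelCoord_of_notMem hJ]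

theorem antidiagDiff_apply (v : Lset k n m → ℝ) (p : Fin (n - k) × Fin k) :
    antidiagDiff k n m v p = Vco k n m v p.1 (p.2 + 1) - Vco k n m v (p.1 + 1) p.2 := by
  simp [antidiagDiff, Vco_eq_labelCoord]

theorem exists_JchRot_of_mem_Lset {J : Finset (ZMod n)} (hJ : J ∈ Lset k n m) :
    ∃ i ≤ n - k, ∃ j ≤ k, JchRot k n m i j = J := by
  obtain ⟨⟨i, j⟩, hij, rfl⟩ := Finset.mem_image.mp (Finset.mem_sdiff.mp hJ).1
  simp only [Finset.mem_product, Finset.mem_range] at hij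
  exact ⟨i, by omega, j, by omega, rfl⟩

theorem antidiagDiff_mem_iff [NeZero n] (hkn : k ≤ n) (S : AddSubgroup ℝ) (v : Lset k n m → ℝ) :
    (∀ p, antidiagDiff k n m v p ∈ S) ↔ ∀ J, v J ∈ S := by
  constructor
  · rintro hdiff ⟨J, hJ⟩
    let F : Finset (ZMod n) → ℝ ⧸ S := fun J => (labelCoord k n m J v : ℝ ⧸ S)
    have F_const : ∀ a < n - k, ∀ b < k,
        F (JchRot k n m a (b + 1)) = F (JchRot k n m (a + 1) b) := by
      intro a ha b hb
      have := hdiff (⟨a, ha⟩, ⟨b, hb⟩)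
      rw [antidiagDiff_apply, Vco_eq_labelCoord, Vco_eq_labelCoord] at this
      exact (QuotientAddGroup.eq_iff_sub_mem).mpr this
    have F_frozen : F (seg n (n - k)) = 0 := by
      simp only [F]
      rw [labelCoord_of_notMem (by simp [Lset]), QuotientAddGroup.mk_zero]
    obtain ⟨i, hi, j, hj, hij⟩ := exists_JchRot_of_mem_Lset hJ
    have F_zero : F J = 0 := by
      rw [← hij, eq_frozen_of_adjacent_eq hkn F_const hi hj, F_frozen]
    rw [← labelCoord_of_mem hJ v]
    exact (QuotientAddGroup.eq_zero_iff _).mp F_zero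
  · intro hv p
    rw [antidiagDiff_apply, Vco_eq_labelCoord, Vco_eq_labelCoord]
    exact S.sub_mem (labelCoord_mem hv _) (labelCoord_mem hv _)

theorem antidiagDiff_injective [NeZero n] (hkn : k ≤ n) :
    Function.Injective (antidiagDiff k n m) := by
  rw [injective_iff_map_eq_zero]
  intro v hv
  ext J
  exact (antidiagDiff_mem_iff hkn ⊥ v).mp (fun p => congrFun hv p) J

theorem antidiagDiff_integral_iff [NeZero n] (hkn : k ≤ n) (v : Lset k n m → ℝ) :
    (∀ p, ∃ z : ℤ, antidiagDiff k n m v p = z) ↔ ∀ J, ∃ z : ℤ, v J = z := by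
  simpa only [AddMonoidHom.mem_range, Int.coe_castAddHom, eq_comm] using
    antidiagDiff_mem_iff hkn (Int.castAddHom ℝ).range v

theorem card_Lset [NeZero n] (hk : 0 < k) (hkn : k < n) : (Lset k n m).card = k * (n - k) := by
  refine le_antisymm ?_ (mul_le_card_Lset hk hkn)
  simpa [mul_comm] using
    LinearMap.finrank_le_finrank_of_injective (antidiagDiff_injective (m := m) hkn.le)

theorem antidiagDiff_bijective [NeZero n] (hk : 0 < k) (hkn : k < n) :
    Function.Bijective (antidiagDiff k n m) := by
  have hinj := antidiagDiff_injective (m := m) hkn.le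
  refine ⟨hinj, (LinearMap.injective_iff_surjective_of_finrank_eq_finrank ?_).mp hinj⟩
  simp [card_Lset hk hkn, mul_comm]

end DifferenceCoordinates

section Exponents

/-- The residue `r` for which `ε_{m,d} = δ(m ≡ r mod n)`. -/
def epsResidue (k : ℕ) (d : ℤ) : ℤ :=
  if 2 ∣ d then -(d / 2) else (d + 1) / 2 + k

theorem epsExpR_eq_ite (n k : ℕ) (m d : ℤ) :
    epsExpR n k m d = if (m : ZMod n) = epsResidue k d then 1 else 0 := by
  by_cases hd : 2 ∣ d <;> simp [epsExpR, epsResidue, hd]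

theorem epsResidue_natCast_sub (k s : ℕ) :
    epsResidue k (s - k) = (k + 1) / 2 + if Even k then -zigzag s else zigzag s := by
  grind [epsResidue, zigzag]

theorem epsExpR_neg_natCast (n k : ℕ) (m : ℤ) :
    epsExpR n k m (-k) = if (m : ZMod n) = ((k + 1) / 2 : ℕ) then 1 else 0 := by
  have hres : epsResidue k (-k) = ((k + 1) / 2 : ℕ) := by
    grind [epsResidue]
  rw [epsExpR_eq_ite, hres, Int.cast_natCast]

theorem epsExpR_last (n k : ℕ) (m : ℤ) :
    epsExpR n k m (n - k - 1) = if (m : ZMod n) = ((n + k + 1) / 2 : ℕ) then 1 else 0 := by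
  have hres : (epsResidue k (n - k - 1) : ZMod n) = (((n + k + 1) / 2 : ℕ) : ℤ) := by
    rw [ZMod.intCast_eq_intCast_iff_dvd_sub, epsResidue]
    split_ifs
    · exact ⟨1, by omega⟩
    · exact ⟨0, by omega⟩
  rw [epsExpR_eq_ite, hres, Int.cast_natCast]

theorem epsExpR_natCast_sub_eq_ite (n k : ℕ) (m : ℤ) :
    ∃ r : ZMod n, ∀ s : ℕ, epsExpR n k m (s - k) = if (zigzag s : ZMod n) = r then 1 else 0 := by
  rcases Nat.even_or_odd k with hk | hk
  · refine ⟨((k + 1) / 2 : ℤ) - m, fun s => ?_⟩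
    rw [epsExpR_eq_ite, epsResidue_natCast_sub, if_pos hk, Int.cast_add, Int.cast_neg,
      ← sub_eq_add_neg]
    exact if_congr (by rw [eq_sub_iff_add_eq, eq_sub_iff_add_eq, add_comm]) rfl rfl
  · refine ⟨m - ((k + 1) / 2 : ℤ), fun s => ?_⟩
    rw [epsExpR_eq_ite, epsResidue_natCast_sub, if_neg (Nat.not_even_iff_odd.mpr hk), Int.cast_add]
    exact if_congr (by rw [eq_sub_iff_add_eq', eq_comm]) rfl rfl

theorem sum_epsExpR (n k : ℕ) [NeZero n] (m : ℤ) :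
    ∑ d ∈ Finset.Ico (-k : ℤ) (n - k), epsExpR n k m d = 1 := by
  obtain ⟨r, hr⟩ := epsExpR_natCast_sub_eq_ite n k m
  calc ∑ d ∈ Finset.Ico (-k : ℤ) (n - k), epsExpR n k m d
      = ∑ s ∈ Finset.range n, epsExpR n k m (s - k) :=
        Finset.sum_nbij' (fun d => (d + k).toNat) (fun s => (s : ℤ) - k)
          (by grind) (by grind) (by grind) (by grind) (by grind)
    _ = ∑ s : Fin n, if (zigzag s : ZMod n) = r then (1 : ℝ) else 0 := by
        simp only [hr, Finset.sum_range]
    _ = ∑ z : ZMod n, if z = r then (1 : ℝ) else 0 :=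
        (zigzag_cast_bijective n).sum_comp fun z => if z = r then (1 : ℝ) else 0
    _ = 1 := by simp

/-- The tail sum `∑_{e > d} ε_{m,e}`, where `e` ranges over the indices `-k ≤ e < n - k` that occur
in the superpotential polytope. -/
noncomputable def epsTail (n k : ℕ) (m d : ℤ) : ℝ :=
  ∑ e ∈ Finset.Ioo d (n - k), epsExpR n k m e

theorem epsTail_integral (n k : ℕ) (m d : ℤ) : ∃ z : ℤ, epsTail n k m d = z := by
  refine ⟨∑ e ∈ Finset.Ioo d (n - k : ℤ), if (m : ZMod n) = epsResidue k e then 1 else 0, ?_⟩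
  simp only [epsTail, epsExpR_eq_ite]
  push_cast
  rfl

theorem epsTail_sub_one {n k : ℕ} {d : ℤ} (m : ℤ) (hd : d < n - k) :
    epsTail n k m (d - 1) = epsExpR n k m d + epsTail n k m d := by
  have Ioo_eq : Finset.Ioo (d - 1) (n - k : ℤ) = insert d (Finset.Ioo d (n - k)) := by
    ext e
    simp only [Finset.mem_Ioo, Finset.mem_insert]
    omega
  rw [epsTail, Ioo_eq, Finset.sum_insert (by simp), epsTail]

theorem epsTail_neg_sub_one (n k : ℕ) [NeZero n] (m : ℤ) : epsTail n k m (-k - 1) = 1 := by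
  rw [← sum_epsExpR n k m, epsTail]
  congr 1
  ext e
  simp only [Finset.mem_Ioo, Finset.mem_Ico]
  omega

theorem epsTail_last (n k : ℕ) (m : ℤ) : epsTail n k m (n - k - 1) = 0 := by
  have Ioo_empty : Finset.Ioo (n - k - 1 : ℤ) (n - k) = ∅ := by
    ext e
    simp only [Finset.mem_Ioo, Finset.notMem_empty, iff_false]
    omega
  rw [epsTail, Ioo_empty, Finset.sum_empty]

end Exponents

section Polytopes

/-- The image of the superpotential polytope `Γ_m` in the difference coordinates
`u_{a,b} = v_{a,b} - v_{a+1,b-1}`, with `u_{a,b}` stored at `(a, b - 1)` as in `GTPoly`. -/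
def diffPoly (k n : ℕ) (m : ℤ) (hnk : 0 < n - k) (hk : 0 < k) : Set (Fin (n - k) × Fin k → ℝ) :=
  {u |
    u (⟨0, hnk⟩, ⟨k - 1, by omega⟩) ≤ epsExpR n k m (-k) ∧
    -u (⟨n - k - 1, by omega⟩, ⟨0, hk⟩) ≤ epsExpR n k m (n - k - 1) ∧
    (∀ (a : Fin (n - k)) (b : Fin k) (hb : (b : ℕ) + 1 < k),
      u (a, b) - u (a, ⟨b + 1, hb⟩) ≤ epsExpR n k m (a - (b + 1))) ∧
    (∀ (a : Fin (n - k)) (b : Fin k), 0 < (a : ℕ) →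
      u (a, b) - u (⟨a - 1, by omega⟩, b) ≤ epsExpR n k m (a - (b + 1)))}

/-- The translation vector `t_{a,b} = ∑_{e > a-b} ε_{m,e}` of the unimodular equivalence, with
`t_{a,b}` stored at `(a, b - 1)` as in `GTPoly`. -/
noncomputable def gtTranslation (k n : ℕ) (m : ℤ) : Fin (n - k) × Fin k → ℝ :=
  fun p => epsTail n k m (p.1 - (p.2 + 1))

variable {k n : ℕ} {m : ℤ}

theorem antidiagDiff_mem_diffPoly_iff (hnk : 0 < n - k) (hk : 0 < k) (v : Lset k n m → ℝ) :
    antidiagDiff k n m v ∈ diffPoly k n m hnk hk ↔ v ∈ GammaPoly k n m := by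
  simp only [diffPoly, GammaPoly, Set.mem_ofPred_eq, antidiagDiff_apply, epsExpR_neg_natCast,
    epsExpR_last]
  refine and_congr ?_ (and_congr ?_ (and_congr ?_ ?_))
  · rw [Nat.sub_add_cancel hk, zero_add]
  · rw [Nat.sub_add_cancel hnk, zero_add, neg_sub]
  · constructor
    · intro h a b ha hb hbk
      obtain ⟨b, rfl⟩ := Nat.exists_eq_add_of_le' hb
      have := h ⟨a, by omega⟩ ⟨b, by omega⟩ (by simp only; omega)
      simp only at this
      push_cast
      linarith
    · intro h a b hb
      have := h a (b + 1) (by omega) (by omega) (by omega)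
      push_cast at this
      linarith
  · constructor
    · intro h a b ha han hb hbk
      obtain ⟨b, rfl⟩ := Nat.exists_eq_add_of_le' hb
      have := h ⟨a, by omega⟩ ⟨b, by omega⟩ ha
      push_cast
      simp only [Nat.sub_add_cancel ha] at this ⊢
      linarith
    · intro h a b ha
      have := h a (b + 1) ha (by omega) (by omega) (by omega)
      push_cast at this
      simp only [Nat.sub_add_cancel ha] at this ⊢
      linarith

theorem add_gtTranslation_mem_GTPoly_iff [NeZero n] (hnk : 0 < n - k) (hk : 0 < k)
    (u : Fin (n - k) × Fin k → ℝ) :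
    u + gtTranslation k n m ∈ GTPoly k n hnk hk ↔ u ∈ diffPoly k n m hnk hk := by
  have tail_step (a : Fin (n - k)) (b : Fin k) :
      epsTail n k m (a - (b + 1) - 1) =
        epsExpR n k m (a - (b + 1)) + epsTail n k m (a - (b + 1)) :=
    epsTail_sub_one m (by omega)
  simp only [diffPoly, GTPoly, gtTranslation, Set.mem_ofPred_eq, Pi.add_apply]
  refine and_congr ?_ (and_congr ?_ (and_congr
    (forall₃_congr fun a b hb => ?_) (forall₃_congr fun a b ha => ?_)))
  · have first := epsTail_sub_one m (show (-k : ℤ) < n - k by omega)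
    rw [epsTail_neg_sub_one] at first
    rw [show (((0 : ℕ) : ℤ) - ((k - 1 : ℕ) + 1)) = -k by omega, first, add_le_add_iff_right]
  · have last := epsTail_sub_one m (show (n - k - 1 : ℤ) < n - k by omega)
    rw [epsTail_last, add_zero] at last
    rw [show (((n - k - 1 : ℕ) : ℤ) - ((0 : ℕ) + 1)) = n - k - 1 - 1 by omega, last,
      neg_le_iff_add_nonneg']
  · rw [show ((a : ℤ) - ((b + 1 : ℕ) + 1)) = a - (b + 1) - 1 by omega, tail_step a b,
      ← add_assoc, add_le_add_iff_right, sub_le_iff_le_add']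
  · rw [show (((a - 1 : ℕ) : ℤ) - (b + 1)) = a - (b + 1) - 1 by omega, tail_step a b,
      ← add_assoc, add_le_add_iff_right, sub_le_iff_le_add']

end Polytopes

theorem gamma_unimodular_equiv_GT_general
    (n k : ℕ) (hk : 0 < k) (hkn : k < n) (m : ℤ) :
    (Lset k n m).card = k * (n - k) ∧
    ∃ (M : (↥(Lset k n m) → ℝ) ≃ₗ[ℝ] (Fin (n - k) × Fin k → ℝ))
      (t : Fin (n - k) × Fin k → ℝ),
      (∀ x, ∃ z : ℤ, t x = (z : ℝ)) ∧
      (∀ v : ↥(Lset k n m) → ℝ,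
        (∀ x, ∃ z : ℤ, v x = (z : ℝ)) ↔ (∀ x, ∃ z : ℤ, M v x = (z : ℝ))) ∧
      (fun v => M v + t) '' (GammaPoly k n m) = GTPoly k n (Nat.sub_pos_of_lt hkn) hk := by
  have : NeZero n := ⟨by omega⟩
  let M := LinearEquiv.ofBijective (antidiagDiff k n m) (antidiagDiff_bijective hk hkn)
  refine ⟨card_Lset hk hkn, M, gtTranslation k n m, fun _ => epsTail_integral _ _ _ _,
    fun v => (antidiagDiff_integral_iff hkn.le v).symm, ?_⟩
  have hΓ : GammaPoly k n m =
      (fun v => M v + gtTranslation k n m) ⁻¹' GTPoly k n (Nat.sub_pos_of_lt hkn) hk := by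
    ext v
    exact ((add_gtTranslation_mem_GTPoly_iff _ hk _).trans
      (antidiagDiff_mem_diffPoly_iff _ hk v)).symm
  have hsurj : Function.Surjective fun v => M v + gtTranslation k n m :=
    (Equiv.addRight (gtTranslation k n m)).surjective.comp M.surjective
  rw [hΓ, Set.image_preimage_eq _ hsurj]

/-- the superpotential polytope of any rotated checkboard graph is
unimodular equivalent to the Gelfand–Tsetlin polytope `GT^1_{k,n}`. -/
theorem gamma_unimodular_equiv_GT
    (n k : ℕ) (hn : 4 ≤ n) (hk : 2 ≤ k) (hkn : k ≤ n - 2) (m : ℤ) :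
    (Lset k n m).card = k * (n - k) ∧
    ∃ (M : (↥(Lset k n m) → ℝ) ≃ₗ[ℝ] (Fin (n - k) × Fin k → ℝ))
      (t : Fin (n - k) × Fin k → ℝ),
      (∀ x, ∃ z : ℤ, t x = (z : ℝ)) ∧
      (∀ v : ↥(Lset k n m) → ℝ,
        (∀ x, ∃ z : ℤ, v x = (z : ℝ)) ↔ (∀ x, ∃ z : ℤ, M v x = (z : ℝ))) ∧
      (fun v => M v + t) '' (GammaPoly k n m) = GTPoly k n (by omega) (by omega) :=
  gamma_unimodular_equiv_GT_general n k (by omega) (by omega) m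
end
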